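/- For p ≥ q ≥ 1 and x_{p,q} a permutation in A_{2(p+q)} that is a product of two disjoint cycles of lengths 2p and 2q, the number of minimal factorizations of x_{p,q} into ℓ_3(x_{p,q}) = p+q many 3-cycles is 2(p+q-1)!(2p)^p (2q)^q / ((p-1)!(q-1)!). -/

import Mathlib

open Equiv Equiv.Perm

/-- The word length of `x` with respect to a generating set `T`. -/
noncomputable def lenT {G : Type*} [Group G] (T : Set G) (x : G) : ℕ :=
  sInf {n | ∃ l : List G, (∀ t ∈ l, t ∈ T) ∧ l.prod = x ∧ l.length = n}

/-- The `T`-prefix order. -/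
def leT {G : Type*} [Group G] (T : Set G) (x y : G) : Prop :=
  lenT T y = lenT T x + lenT T (x⁻¹ * y)

/-- The set of 3-cycles of the symmetric group on `Fin N`. -/
def threeCycles (N : ℕ) : Set (Perm (Fin N)) := {σ | σ.IsThreeCycle}

/-- The set of transpositions of the symmetric group on `Fin N`. -/
def transpositions (N : ℕ) : Set (Perm (Fin N)) := {σ | σ.IsSwap}

/-- The number of odd cycles of a permutation, counting fixed points. -/
def ocyc {N : ℕ} (x : Perm (Fin N)) : ℕ :=
  (x.cycleType.filter (fun n => Odd n)).card + (N - x.cycleType.sum)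

section arith
open Finset

theorem tri_assoc (n : ℕ) (f : ℕ → ℕ → ℕ → ℚ) :
    ∑ x ∈ antidiagonal n, ∑ y ∈ antidiagonal x.2, f x.1 y.1 y.2
      = ∑ x ∈ antidiagonal n, ∑ y ∈ antidiagonal x.1, f y.1 y.2 x.2 := by
  rw [Finset.sum_sigma', Finset.sum_sigma']
  refine Finset.sum_nbij' (fun s => ⟨(s.1.1 + s.2.1, s.2.2), (s.1.1, s.2.1)⟩)
    (fun s => ⟨(s.2.1, s.2.2 + s.1.2), (s.2.2, s.1.2)⟩) ?_ ?_ ?_ ?_ ?_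
  · rintro ⟨⟨a, b⟩, ⟨c, d⟩⟩ h
    simp only [mem_sigma, HasAntidiagonal.mem_antidiagonal] at h ⊢
    exact ⟨by omega, by first | rfl | trivial⟩
  · rintro ⟨⟨a, b⟩, ⟨c, d⟩⟩ h
    simp only [mem_sigma, HasAntidiagonal.mem_antidiagonal] at h ⊢
    exact ⟨by omega, by first | rfl | trivial⟩
  · rintro ⟨⟨a, b⟩, ⟨c, d⟩⟩ h
    simp only [mem_sigma, HasAntidiagonal.mem_antidiagonal] at h ⊢
    obtain ⟨h1, rfl⟩ := h
    rfl
  · rintro ⟨⟨a, b⟩, ⟨c, d⟩⟩ h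
    simp only [mem_sigma, HasAntidiagonal.mem_antidiagonal] at h ⊢
    obtain ⟨h1, rfl⟩ := h
    rfl
  · rintro ⟨⟨a, b⟩, ⟨c, d⟩⟩ h
    rfl

theorem choose_fac {n : ℕ} {x : ℕ × ℕ} (h : x ∈ antidiagonal n) :
    (n.choose x.1 : ℚ) = n.factorial / (x.1.factorial * x.2.factorial) := by
  rw [HasAntidiagonal.mem_antidiagonal] at h
  subst h
  rw [Nat.cast_add_choose]

theorem binom_div (a b : ℚ) (n : ℕ) :
    ∑ x ∈ antidiagonal n, a ^ x.1 / x.1.factorial * (b ^ x.2 / x.2.factorial)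
      = (a + b) ^ n / n.factorial := by
  rw [(Commute.all a b).add_pow', Finset.sum_div]
  refine Finset.sum_congr rfl fun x hx => ?_
  rw [nsmul_eq_mul, choose_fac hx]
  have := Nat.factorial_ne_zero n
  have := Nat.factorial_ne_zero x.1
  have := Nat.factorial_ne_zero x.2
  field_simp

theorem fd_zero (x z : ℚ) (hz : z ≠ 0) (s r : ℕ) (h : s < r) :
    ∑ i ∈ antidiagonal r, (-1 : ℚ) ^ i.2 / (i.1.factorial * i.2.factorial) * (x + i.1 * z) ^ s = 0 := by
  have h1 := congrFun (fwdDiff_iter_pow_eq_zero_of_lt (R := ℚ) h) (x / z)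
  rw [fwdDiff_iter_eq_sum_shift, ← Finset.Nat.sum_antidiagonal_eq_sum_range_succ
    (fun k l => ((-1 : ℤ) ^ l * (r.choose k : ℤ)) • (x / z + k • 1) ^ s)] at h1
  have h2 : ∑ i ∈ antidiagonal r, (-1 : ℚ) ^ i.2 / (i.1.factorial * i.2.factorial) * (x + i.1 * z) ^ s
      = z ^ s / r.factorial * ∑ ij ∈ antidiagonal r,
        ((-1 : ℤ) ^ ij.2 * (r.choose ij.1 : ℤ)) • (x / z + ij.1 • (1 : ℚ)) ^ s := by
    rw [Finset.mul_sum]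
    refine Finset.sum_congr rfl fun i hi => ?_
    have e : x + i.1 * z = z * (x / z + i.1 • (1 : ℚ)) := by
      rw [nsmul_eq_mul]; field_simp
    rw [e, mul_pow, zsmul_eq_mul]
    push_cast
    rw [choose_fac hi]
    have := Nat.factorial_ne_zero r
    have := Nat.factorial_ne_zero i.1
    have := Nat.factorial_ne_zero i.2
    field_simp
  rw [h2, h1]; simp

def abelA (z x : ℚ) (i : ℕ) : ℚ := x * (x + i * z) ^ i / (x + i * z) / i.factorial

theorem abel1 (x y z : ℚ) (hx : 0 < x) (hz : 0 < z) (n : ℕ) :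
    ∑ i ∈ antidiagonal n, abelA z x i.1 * ((y + i.2 * z) ^ i.2 / i.2.factorial)
      = (x + y + n * z) ^ n / n.factorial := by
  set S := x + y + n * z with hS
  have h1 : ∀ i ∈ antidiagonal n, abelA z x i.1 * ((y + i.2 * z) ^ i.2 / i.2.factorial)
      = ∑ k ∈ antidiagonal i.2, abelA z x i.1 * ((-(x + i.1 * z)) ^ k.1 / k.1.factorial *
          (S ^ k.2 / k.2.factorial)) := by
    intro i hi
    rw [← Finset.mul_sum, binom_div]
    rw [HasAntidiagonal.mem_antidiagonal] at hi
    congr 3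
    rw [hS, ← hi]; push_cast; ring
  rw [Finset.sum_congr rfl h1, tri_assoc n (fun a b c => abelA z x a * ((-(x + a * z)) ^ b / b.factorial *
          (S ^ c / c.factorial)))]
  have h2 : ∀ r : ℕ, ∑ k ∈ antidiagonal r, abelA z x k.1 * ((-(x + k.1 * z)) ^ k.2 / k.2.factorial)
      = if r = 0 then 1 else 0 := by
    intro r
    split_ifs with hr
    · subst hr
      simp [abelA, hx.ne']
    · have := fd_zero x z hz.ne' (r - 1) r (by omega)
      rw [← mul_zero x, ← this, Finset.mul_sum]
      refine Finset.sum_congr rfl fun k hk => ?_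
      have hp : x + k.1 * z ≠ 0 := by positivity
      rw [HasAntidiagonal.mem_antidiagonal] at hk
      have e : (x + k.1 * z) ^ (r - 1) = (x + k.1 * z) ^ k.1 * (x + k.1 * z) ^ k.2 / (x + k.1 * z) := by
        rw [← pow_add, hk, eq_div_iff hp, ← pow_succ]
        congr 1; omega
      rw [e, abelA, neg_pow]
      field_simp
  have h3 : ∀ i ∈ antidiagonal n, ∑ k ∈ antidiagonal i.1, abelA z x k.1 * ((-(x + k.1 * z)) ^ k.2 / k.2.factorial *
          (S ^ i.2 / i.2.factorial)) = (if i.1 = 0 then 1 else 0) * (S ^ i.2 / i.2.factorial) := by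
    intro i hi
    rw [← h2, Finset.sum_mul]
    exact Finset.sum_congr rfl fun k hk => by ring
  rw [Finset.sum_congr rfl h3, Finset.sum_eq_single (0, n)]
  · simp
  · rintro ⟨a, b⟩ h hne
    rw [HasAntidiagonal.mem_antidiagonal] at h
    have : a ≠ 0 := by
      rintro rfl
      apply hne
      simp at h
      simp [h]
    simp [this]
  · simp

theorem abel2 (x y z : ℚ) (hx : 0 < x) (hy : 0 < y) (hz : 0 < z) (n : ℕ) :
    ∑ i ∈ antidiagonal n, abelA z x i.1 * abelA z y i.2 = abelA z (x + y) n := by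
  rcases n with _ | n
  · have h3 : x + y ≠ 0 := by positivity
    simp [abelA, hx.ne', hy.ne', h3]
  have h0 : ∀ i ∈ antidiagonal (n + 1), abelA z x i.1 * abelA z y i.2
      = abelA z x i.1 * ((y + i.2 * z) ^ i.2 / i.2.factorial)
        - abelA z x i.1 * (i.2 * z * ((y + i.2 * z) ^ i.2 / (y + i.2 * z) / i.2.factorial)) := by
    intro i _
    have hp : y + i.2 * z ≠ 0 := by positivity
    rw [← mul_sub]
    congr 1
    rw [abelA]
    field_simp
    ring
  rw [Finset.sum_congr rfl h0, Finset.sum_sub_distrib, abel1 x y z hx hz,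
    Finset.Nat.antidiagonal_succ', Finset.sum_cons, Finset.sum_map]
  have h1 := abel1 x (y + z) z hx hz n
  have h2 : ∀ i ∈ antidiagonal n, abelA z x i.1 * ((i.2 + 1 : ℕ) * z * ((y + (i.2 + 1 : ℕ) * z) ^ (i.2 + 1) / (y + (i.2 + 1 : ℕ) * z) / (i.2 + 1).factorial))
     = z * (abelA z x i.1 * ((y + z + i.2 * z) ^ i.2 / i.2.factorial)) := by
    intro i _
    have hp : y + (i.2 + 1 : ℕ) * z ≠ 0 := by positivity
    have e : y + z + i.2 * z = y + (i.2 + 1 : ℕ) * z := by push_cast; ring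
    rw [e, Nat.factorial_succ, pow_succ]
    have := Nat.factorial_ne_zero i.2
    push_cast at hp ⊢
    field_simp
  simp only [Function.Embedding.prodMap, Function.Embedding.coeFn_mk, Prod.map, Function.Embedding.refl_apply]
  have e2 := Finset.sum_congr rfl h2
  simp only [Nat.succ_eq_add_one] at e2 ⊢
  rw [e2, ← Finset.mul_sum, h1]
  simp only [Nat.cast_zero, zero_mul, mul_zero, zero_add]
  rw [abelA]
  have e : x + (y + z) + n * z = x + y + (n + 1 : ℕ) * z := by push_cast; ring
  have hp : x + y + (n + 1 : ℕ) * z ≠ 0 := by positivity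
  rw [e, Nat.factorial_succ, pow_succ]
  have := Nat.factorial_ne_zero n
  push_cast at hp ⊢
  field_simp
  ring

theorem beta_sum (n q : ℕ) :
    ∑ k ∈ antidiagonal n, (n.choose k.1 : ℚ) * ((-1) ^ k.1 / (k.1 + (q + 1)))
      = n.factorial * q.factorial / (q + n + 1).factorial := by
  induction n generalizing q with
  | zero =>
    simp [Nat.factorial_succ]
    have := Nat.factorial_ne_zero q
    field_simp
  | succ n ih =>
    rw [Finset.sum_antidiagonal_choose_succ_mul (fun k d => ((-1 : ℚ)) ^ k / (k + (q + 1)))]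
    have h1 := ih q
    have h2 := ih (q + 1)
    have h3 : ∑ k ∈ antidiagonal n, (n.choose k.2 : ℚ) * ((-1) ^ (k.1 + 1) / ((k.1 + 1 : ℕ) + (q + 1)))
        = - ∑ k ∈ antidiagonal n, (n.choose k.1 : ℚ) * ((-1) ^ k.1 / (k.1 + ((q + 1 : ℕ) + 1))) := by
      rw [← Finset.sum_neg_distrib]
      refine Finset.sum_congr rfl fun k hk => ?_
      rw [HasAntidiagonal.mem_antidiagonal] at hk
      rw [Nat.choose_symm_of_eq_add hk.symm, pow_succ]
      push_cast
      rw [show (k.1 : ℚ) + 1 + (q + 1) = k.1 + (q + 1 + 1) by ring]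
      ring
    rw [h1, h3, h2, show q + 1 + n + 1 = (q + n + 1) + 1 by ring, show q + (n + 1) + 1 = (q + n + 1) + 1 by ring,
      Nat.factorial_succ (q + n + 1), Nat.factorial_succ q, Nat.factorial_succ n]
    have := Nat.factorial_ne_zero (q + n + 1)
    push_cast
    have : (q : ℚ) + n + 1 + 1 ≠ 0 := by positivity
    field_simp
    ring

theorem V_sum (j q : ℕ) :
    ∑ k ∈ antidiagonal j, (-1 : ℚ) ^ k.2 / (k.1.factorial * k.2.factorial) * (k.1 ^ j / (k.1 + (q + 1)))
      = (q + 1) ^ j * q.factorial / (q + j + 1).factorial := by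
  have h1 : ∀ k ∈ antidiagonal j, (-1 : ℚ) ^ k.2 / (k.1.factorial * k.2.factorial) * (k.1 ^ j / (k.1 + (q + 1)))
      = (∑ s ∈ range j, (-(q + 1 : ℚ)) ^ (j - 1 - s) * ((-1 : ℚ) ^ k.2 / (k.1.factorial * k.2.factorial) * (0 + k.1 * 1) ^ s))
       + (q + 1) ^ j / j.factorial * ((j.choose k.1 : ℚ) * ((-1) ^ k.1 / (k.1 + (q + 1)))) := by
    intro k hk
    have hp : (k.1 : ℚ) + (q + 1) ≠ 0 := by positivity
    have g := (Commute.all (k.1 : ℚ) (-(q + 1 : ℚ))).geom_sum₂_mul j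
    have g2 : (k.1 : ℚ) ^ j / (k.1 + (q + 1)) = (∑ s ∈ range j, (k.1 : ℚ) ^ s * (-(q + 1 : ℚ)) ^ (j - 1 - s))
        + (-(q + 1 : ℚ)) ^ j / (k.1 + (q + 1)) := by
      field_simp
      rw [sub_neg_eq_add] at g
      linear_combination -g
    rw [g2, mul_add, Finset.mul_sum]
    congr 1
    · refine Finset.sum_congr rfl fun s _ => ?_
      simp only [zero_add, mul_one]; ring
    · rw [choose_fac hk, neg_pow (q + 1 : ℚ)]
      rw [HasAntidiagonal.mem_antidiagonal] at hk
      have e : (-1 : ℚ) ^ k.2 * (-1) ^ j = (-1) ^ k.1 := by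
        rw [← hk, ← pow_add, show k.2 + (k.1 + k.2) = k.1 + 2 * k.2 by ring, pow_add, pow_mul]; simp
      rw [← e]
      have := Nat.factorial_ne_zero j
      have := Nat.factorial_ne_zero k.1
      have := Nat.factorial_ne_zero k.2
      field_simp
  rw [Finset.sum_congr rfl h1, Finset.sum_add_distrib, Finset.sum_comm, ← Finset.mul_sum, beta_sum]
  rw [Finset.sum_eq_zero]
  · have := Nat.factorial_ne_zero j
    have := Nat.factorial_ne_zero (q + j + 1)
    field_simp
    ring
  · intro s hs
    rw [← Finset.mul_sum, fd_zero 0 1 one_ne_zero s j (Finset.mem_range.1 hs), mul_zero]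

def bigP (k : ℕ) : ℚ := (k : ℚ) ^ k / k.factorial

theorem U_sum (p q : ℕ) :
    (q + 1) * bigP (q + 1) * ∑ i ∈ antidiagonal p, ((i.1 + 1 : ℚ) ^ i.1 / i.1.factorial) * (bigP i.2 / (i.2 + (q + 1)))
      = ∑ i ∈ antidiagonal p, (p + 1 : ℚ) ^ i.1 / i.1.factorial * ((q + 1 : ℚ) ^ (q + 1 + i.2) / (q + 1 + i.2).factorial) := by
  have h1 : ∀ i ∈ antidiagonal p, ((i.2 + 1 : ℚ) ^ i.2 / i.2.factorial) * (bigP i.1 / (i.1 + (q + 1)))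
     = ∑ c ∈ antidiagonal i.2, ((-(i.1 : ℚ)) ^ c.1 / c.1.factorial * ((p + 1 : ℚ) ^ c.2 / c.2.factorial)) * (bigP i.1 / (i.1 + (q + 1))) := by
    intro i hi
    rw [← Finset.sum_mul, binom_div]
    rw [HasAntidiagonal.mem_antidiagonal] at hi
    congr 3
    rw [← hi]; push_cast; ring
  rw [← Finset.Nat.sum_antidiagonal_swap]
  simp only [Prod.fst_swap, Prod.snd_swap]
  rw [Finset.sum_congr rfl h1, tri_assoc p (fun a b c => ((-(a : ℚ)) ^ b / b.factorial * ((p + 1 : ℚ) ^ c / c.factorial)) * (bigP a / (a + (q + 1)))),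
    Finset.mul_sum, ← Finset.Nat.sum_antidiagonal_swap]
  refine Finset.sum_congr rfl fun i _ => ?_
  simp only [Prod.fst_swap, Prod.snd_swap]
  have h2 : ∀ k ∈ antidiagonal i.2, ((-(k.1 : ℚ)) ^ k.2 / k.2.factorial * ((p + 1 : ℚ) ^ i.1 / i.1.factorial)) * (bigP k.1 / (k.1 + (q + 1)))
     = (p + 1 : ℚ) ^ i.1 / i.1.factorial * ((-1 : ℚ) ^ k.2 / (k.1.factorial * k.2.factorial) * (k.1 ^ i.2 / (k.1 + (q + 1)))) := by
    intro k hk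
    rw [HasAntidiagonal.mem_antidiagonal] at hk
    rw [← hk, neg_pow, bigP, pow_add]
    ring
  rw [Finset.sum_congr rfl h2, ← Finset.mul_sum, V_sum, bigP, Nat.factorial_succ q, show q + i.2 + 1 = q + 1 + i.2 by ring]
  have := Nat.factorial_ne_zero q
  push_cast
  have : (q : ℚ) + 1 ≠ 0 := by positivity
  field_simp
  rw [pow_add]; ring

theorem cut_half (p q : ℕ) :
    (p + q + 2 : ℚ) * ∑ i ∈ antidiagonal p, abelA 1 1 i.1 * (i.2 * bigP i.2 / (i.2 + (q + 1)))
      = (p + 1) * bigP (p + 1) - (q + 1) * ∑ i ∈ antidiagonal p, ((i.1 + 1 : ℚ) ^ i.1 / i.1.factorial) * (bigP i.2 / (i.2 + (q + 1))) := by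
  have a1 := abel1 1 0 1 one_pos one_pos p
  have e : ((1 : ℚ) + 0 + p * 1) ^ p / p.factorial = bigP (p + 1) := by
    rw [bigP, Nat.factorial_succ, pow_succ]
    push_cast
    have : (p : ℚ) + 1 ≠ 0 := by positivity
    field_simp
    ring
  rw [e] at a1
  rw [← a1, Finset.mul_sum, Finset.mul_sum, Finset.mul_sum, ← Finset.sum_sub_distrib]
  refine Finset.sum_congr rfl fun i hi => ?_
  rw [HasAntidiagonal.mem_antidiagonal] at hi
  have hp : (i.2 : ℚ) + (q + 1) ≠ 0 := by positivity
  have hp2 : (i.1 : ℚ) + 1 ≠ 0 := by positivity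
  have e2 : ((i.1 + 1 : ℚ) ^ i.1 / i.1.factorial) = (i.1 + 1) * abelA 1 1 i.1 := by
    rw [abelA, show (1 : ℚ) + i.1 * 1 = i.1 + 1 by ring]
    field_simp
  rw [e2, ← hi]
  simp only [zero_add, mul_one, bigP]
  push_cast
  field_simp
  ring

theorem EI1 (p q : ℕ) :
    bigP (q + 1) * ∑ i ∈ antidiagonal p, abelA 1 1 i.1 * (i.2 * bigP i.2 / (i.2 + (q + 1)))
    + bigP (p + 1) * ∑ i ∈ antidiagonal q, abelA 1 1 i.1 * (i.2 * bigP i.2 / (i.2 + (p + 1)))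
    + abelA 1 1 (p + q + 1) = bigP (p + 1) * bigP (q + 1) := by
  have h1 := cut_half p q
  have h2 := cut_half q p
  have u1 := U_sum p q
  have u2 := U_sum q p
  have b := binom_div (p + 1) (q + 1) (p + q + 1)
  have b2 : ∑ i ∈ antidiagonal (p + q + 1), (p + 1 : ℚ) ^ i.1 / i.1.factorial * ((q + 1 : ℚ) ^ i.2 / i.2.factorial)
     = ∑ i ∈ antidiagonal p, (p + 1 : ℚ) ^ i.1 / i.1.factorial * ((q + 1 : ℚ) ^ (q + 1 + i.2) / (q + 1 + i.2).factorial)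
     + ∑ i ∈ antidiagonal q, (q + 1 : ℚ) ^ i.1 / i.1.factorial * ((p + 1 : ℚ) ^ (p + 1 + i.2) / (p + 1 + i.2).factorial) := by
    rw [Finset.Nat.sum_antidiagonal_eq_sum_range_succ (fun a b => (p + 1 : ℚ) ^ a / a.factorial * ((q + 1 : ℚ) ^ b / b.factorial)),
      show (p + q + 1).succ = (p + 1) + (q + 1) by simp; ring, Finset.sum_range_add]
    congr 1
    · rw [Finset.Nat.sum_antidiagonal_eq_sum_range_succ (fun a b => (p + 1 : ℚ) ^ a / a.factorial * ((q + 1 : ℚ) ^ (q + 1 + b) / (q + 1 + b).factorial))]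
      refine Finset.sum_congr rfl fun i hi => ?_
      rw [Finset.mem_range] at hi
      rw [show p + q + 1 - i = q + 1 + (p - i) by omega]
    · rw [← Finset.Nat.sum_antidiagonal_swap]
      simp only [Prod.fst_swap, Prod.snd_swap]
      rw [Finset.Nat.sum_antidiagonal_eq_sum_range_succ (fun a b => (q + 1 : ℚ) ^ b / b.factorial * ((p + 1 : ℚ) ^ (p + 1 + a) / (p + 1 + a).factorial))]
      refine Finset.sum_congr rfl fun i hi => ?_
      rw [Finset.mem_range] at hi
      rw [show p + q + 1 - (p + 1 + i) = q - i by omega]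
      ring
  rw [b2, ← u1, ← u2] at b
  have hn : (p + q + 2 : ℚ) ≠ 0 := by positivity
  have e : abelA 1 1 (p + q + 1) * (p + q + 2) = ((p + 1 + (q + 1) : ℚ)) ^ (p + q + 1) / (p + q + 1).factorial := by
    rw [abelA]; push_cast
    rw [show (1 : ℚ) + (p + q + 1) * 1 = p + q + 2 by ring, show (p + 1 + (q + 1) : ℚ) = p + q + 2 by ring]
    field_simp
  rw [← e] at b
  apply mul_left_cancel₀ hn
  rw [show ((q : ℚ) + p + 2) = p + q + 2 by ring] at h2
  linear_combination bigP (q + 1) * h1 + bigP (p + 1) * h2 - b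

def om (n : ℕ) : ℚ :=
  if Even n then (n : ℚ) ^ (n / 2) / (n / 2 - 1).factorial
  else (n : ℚ) ^ (n / 2) / n / (n / 2).factorial

theorem om_odd (i : ℕ) : om (2 * i + 1) = abelA 2 1 i := by
  rw [om, if_neg (by simp), abelA, show (2 * i + 1) / 2 = i by omega]
  push_cast
  rw [show (1 : ℚ) + i * 2 = 2 * i + 1 by ring, one_mul]

theorem om_even (k : ℕ) (hk : 1 ≤ k) : om (2 * k) = 2 ^ k * (k * bigP k) := by
  obtain ⟨k, rfl⟩ := Nat.exists_eq_add_of_le' hk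
  rw [om, if_pos (by simp), show (2 * (k + 1)) / 2 = k + 1 by omega, bigP, Nat.factorial_succ]
  push_cast
  rw [mul_pow]
  have : (k : ℚ) + 1 ≠ 0 := by positivity
  field_simp

theorem abelA_two (i : ℕ) : abelA 2 2 i = 2 ^ i * abelA 1 1 i := by
  rw [abelA, abelA, show (2 : ℚ) + i * 2 = 2 * (1 + i * 1) by ring, mul_pow]
  have : (1 : ℚ) + i * 1 ≠ 0 := by positivity
  field_simp

theorem EI (p q : ℕ) (hp : 1 ≤ p) (hq : 1 ≤ q) :
    (2 * p) * om (2 * q) * ∑ i ∈ antidiagonal (p - 1), abelA 2 2 i.1 * (if i.2 = 0 then 0 else om (2 * i.2) * (4 / (2 * i.2 + 2 * q)))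
    + (2 * q) * om (2 * p) * ∑ i ∈ antidiagonal (q - 1), abelA 2 2 i.1 * (if i.2 = 0 then 0 else om (2 * i.2) * (4 / (2 * i.2 + 2 * p)))
    + 4 * p * q * abelA 2 2 (p + q - 1) = 2 * om (2 * p) * om (2 * q) := by
  obtain ⟨p, rfl⟩ := Nat.exists_eq_add_of_le' hp
  obtain ⟨q, rfl⟩ := Nat.exists_eq_add_of_le' hq
  have key : ∀ p q : ℕ, ∑ i ∈ antidiagonal p, abelA 2 2 i.1 * (if i.2 = 0 then 0 else om (2 * i.2) * (4 / (2 * i.2 + 2 * (q + 1 : ℕ))))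
      = 2 ^ (p + 1) * ∑ i ∈ antidiagonal p, abelA 1 1 i.1 * (i.2 * bigP i.2 / (i.2 + (q + 1))) := by
    intro p q
    rw [Finset.mul_sum]
    refine Finset.sum_congr rfl fun i hi => ?_
    rw [HasAntidiagonal.mem_antidiagonal] at hi
    split_ifs with h
    · simp [h]
    · rw [om_even _ (by omega), abelA_two, ← hi]
      have hp : (i.2 : ℚ) + (q + 1) ≠ 0 := by positivity
      have hp : 2 * (i.2 : ℚ) + 2 * (q + 1) ≠ 0 := by positivity
      push_cast
      field_simp
      ring
  have h := EI1 p q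
  simp only [Nat.add_sub_cancel]
  rw [key, key, om_even _ hp, om_even _ hq, show p + 1 + (q + 1) - 1 = p + q + 1 by omega, abelA_two]
  push_cast
  linear_combination (4 * 2 ^ (p + q + 1) * (p + 1) * (q + 1)) * h

end arith


set_option linter.unusedSectionVars false

section comb
variable {α : Type*} [Fintype α] [DecidableEq α]

def pts (x : Perm α) : Multiset ℕ := x.partition.parts

def TT (u v w : α) : Perm α := swap v w * swap u v

theorem TT_rot (u v w : α) (h1 : u ≠ v) (h2 : v ≠ w) (h3 : u ≠ w) : TT u v w = TT v w u := by
  ext z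
  simp only [TT, Perm.mul_apply, swap_apply_def]
  grind

theorem pts_mul (l : List α) (hl : l.Nodup) (hne : l ≠ []) (y : Perm α) (hy : ∀ a ∈ l, y a = a) :
    pts (l.formPerm * y) + Multiset.replicate l.length 1 = l.length ::ₘ pts y := by
  have hd : Disjoint l.formPerm y := by
    intro a
    by_cases ha : a ∈ l
    · exact Or.inr (hy a ha)
    · exact Or.inl (List.formPerm_apply_of_notMem ha)
  rcases l with _ | ⟨a, _ | ⟨b, l⟩⟩
  · exact absurd rfl hne
  · simp [pts]
    rw [add_comm, Multiset.singleton_add]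
  · set k := a :: b :: l with hk
    have h2 : 2 ≤ k.length := by simp [hk]
    have hs : k.formPerm.support.card = k.length := by
      rw [List.support_formPerm_of_nodup k hl (by simp [hk]), List.toFinset_card_of_nodup hl]
    have hle : (k.formPerm * y).support.card ≤ Fintype.card α := Finset.card_le_univ _
    rw [hd.card_support_mul, hs] at hle
    rw [pts, pts, parts_partition, parts_partition, hd.cycleType_mul, (List.isCycle_formPerm hl h2).cycleType,
      hd.card_support_mul, hs, add_assoc, ← Multiset.replicate_add, add_assoc, Multiset.singleton_add]
    congr 3
    omega

theorem pts_sum (x : Perm α) : (pts x).sum = Fintype.card α := x.partition.parts_sum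

theorem cut1 (u v : α) (A B : List α) (h : (u :: A ++ v :: B).Nodup) :
    swap u v * (u :: A ++ v :: B).formPerm = (u :: A).formPerm * (v :: B).formPerm := by
  induction A generalizing u with
  | nil => simp [← mul_assoc]
  | cons a A ih =>
    have h' : (a :: A ++ v :: B).Nodup := by
      simp only [List.cons_append, List.nodup_cons] at h ⊢; exact h.2
    have ih := ih a h'
    have e : (a :: A ++ v :: B).formPerm = swap a v * ((a :: A).formPerm * (v :: B).formPerm) := by
      rw [← ih, ← mul_assoc]; simp
    rw [List.cons_append, List.cons_append, List.formPerm_cons_cons, List.formPerm_cons_cons, ← List.cons_append, e]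
    simp only [← mul_assoc]
    congr 2
    have h1 : u ≠ a := by rintro rfl; simp at h
    have h2 : u ≠ v := by rintro rfl; simp at h
    have h3 : a ≠ v := by rintro rfl; simp at h
    ext z
    simp only [Perm.mul_apply, swap_apply_def]
    grind

theorem merge1 (u v : α) (A B : List α) (h : (u :: A ++ v :: B).Nodup) :
    swap u v * ((u :: A).formPerm * (v :: B).formPerm) = (u :: A ++ v :: B).formPerm := by
  rw [← cut1 u v A B h, ← mul_assoc]; simp

theorem fp_comm (k l : List α) (h : k.Disjoint l) : k.formPerm * l.formPerm = l.formPerm * k.formPerm := by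
  have hd : Disjoint k.formPerm l.formPerm := by
    intro a
    by_cases ha : a ∈ k
    · exact Or.inr (List.formPerm_apply_of_notMem (h ha))
    · exact Or.inl (List.formPerm_apply_of_notMem ha)
  exact hd.commute

theorem sw_comm (u v : α) (l : List α) (hu : u ∉ l) (hv : v ∉ l) :
    swap u v * l.formPerm = l.formPerm * swap u v := by
  rw [mul_swap_eq_swap_mul, List.formPerm_apply_of_notMem hu, List.formPerm_apply_of_notMem hv]

theorem rot_app (A B : List α) (h : (A ++ B).Nodup) : (A ++ B).formPerm = (B ++ A).formPerm :=
  List.formPerm_eq_of_isRotated h List.isRotated_append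

theorem T_good (u v w : α) (A B C : List α) (h : (u :: A ++ (v :: B ++ w :: C)).Nodup) :
    TT u v w * (u :: A ++ (v :: B ++ w :: C)).formPerm
      = (u :: A).formPerm * ((v :: B).formPerm * (w :: C).formPerm) := by
  have hh := List.nodup_append'.1 h
  have hv : v ∉ u :: A := fun hv => hh.2.2 hv (by simp)
  have hw : w ∉ u :: A := fun hv => hh.2.2 hv (by simp)
  rw [TT, mul_assoc]
  have := cut1 u v A (B ++ w :: C) h
  rw [← List.cons_append] at this
  rw [this, ← mul_assoc, sw_comm v w _ hv hw, mul_assoc, cut1 v w B C hh.2.1]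

theorem T_bad (u v w : α) (A B C : List α) (h : (u :: A ++ w :: B ++ v :: C).Nodup) :
    TT u v w * (u :: A ++ w :: B ++ v :: C).formPerm = (w :: B ++ u :: A ++ v :: C).formPerm := by
  have hh := List.nodup_append'.1 h
  have h2 : (w :: B ++ u :: A ++ v :: C).Nodup := by
    refine (List.Perm.nodup_iff ?_).1 h
    exact List.Perm.append_right _ List.perm_append_comm
  rw [TT, mul_assoc]
  have := cut1 u v (A ++ w :: B) C h
  rw [← List.cons_append] at this
  rw [this, rot_app _ _ hh.1, swap_comm]
  exact merge1 w v (B ++ u :: A) C h2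

theorem T_two (u v w : α) (A B C : List α) (h : (u :: A ++ (v :: B ++ w :: C)).Nodup) :
    TT u v w * ((u :: A ++ v :: B).formPerm * (w :: C).formPerm)
      = (u :: A).formPerm * (v :: B ++ w :: C).formPerm := by
  have hh := List.nodup_append'.1 h
  have hv : v ∉ u :: A := fun hv => hh.2.2 hv (by simp)
  have hw : w ∉ u :: A := fun hv => hh.2.2 hv (by simp)
  have h1 : (u :: A ++ v :: B).Nodup := by
    rw [← List.append_assoc] at h
    exact (List.nodup_append'.1 h).1
  rw [TT, mul_assoc, ← mul_assoc (swap u v), cut1 u v A B h1, mul_assoc, ← mul_assoc,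
    sw_comm v w _ hv hw, mul_assoc, merge1 v w B C hh.2.1]

theorem T_three (u v w : α) (A B C : List α) (h : (u :: A ++ (v :: B ++ w :: C)).Nodup) :
    TT u v w * ((u :: A).formPerm * ((v :: B).formPerm * (w :: C).formPerm))
      = (v :: B ++ u :: A ++ w :: C).formPerm := by
  rw [← List.append_assoc] at h
  have hh := List.nodup_append'.1 h
  have h2 : (v :: B ++ u :: A ++ w :: C).Nodup := by
    refine (List.Perm.nodup_iff ?_).1 h
    exact List.Perm.append_right _ List.perm_append_comm
  rw [TT, mul_assoc, ← mul_assoc (u :: A).formPerm, ← mul_assoc (swap u v), merge1 u v A B hh.1, rot_app _ _ hh.1]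
  exact merge1 v w (B ++ u :: A) C h2

noncomputable def cl (x : Perm α) (u : α) : ℕ := Function.minimalPeriod x u

theorem cl_pos (x : Perm α) (u : α) : 0 < cl x u := by
  apply Function.minimalPeriod_pos_of_mem_periodicPts
  exact Function.Injective.mem_periodicPts x.injective u

theorem it_inj (x : Perm α) (u : α) {i j : ℕ} (hi : i < cl x u) (hj : j < cl x u)
    (h : x^[i] u = x^[j] u) : i = j :=
  Function.iterate_injOn_Iio_minimalPeriod hi hj h

theorem it_same (x : Perm α) (u : α) (i : ℕ) : x.SameCycle u (x^[i] u) := by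
  rw [Perm.iterate_eq_pow]
  exact (sameCycle_pow_right).2 (SameCycle.refl _ _)

theorem same_it (x : Perm α) (u v : α) (h : x.SameCycle u v) : ∃ i < cl x u, x^[i] u = v := by
  obtain ⟨i, hi⟩ := h.exists_nat_pow_eq
  refine ⟨i % cl x u, Nat.mod_lt _ (cl_pos x u), ?_⟩
  rw [cl, Function.iterate_mod_minimalPeriod_eq, Perm.iterate_eq_pow, hi]

noncomputable def seg (x : Perm α) (u : α) (i n : ℕ) : List α := (List.range' i n).map (fun k => x^[k] u)

theorem seg_len (x : Perm α) (u : α) (i n : ℕ) : (seg x u i n).length = n := by simp [seg]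

theorem seg_app (x : Perm α) (u : α) (i n m : ℕ) : seg x u i n ++ seg x u (i + n) m = seg x u i (n + m) := by
  rw [seg, seg, seg, ← List.map_append, List.range'_append_1]

theorem seg_cons (x : Perm α) (u : α) (i n : ℕ) (hn : 0 < n) :
    seg x u i n = x^[i] u :: seg x u (i + 1) (n - 1) := by
  obtain ⟨n, rfl⟩ := Nat.exists_eq_add_of_le' hn
  simp [seg, List.range'_succ]

noncomputable def cyL (x : Perm α) (u : α) : List α := seg x u 0 (cl x u)

theorem cyL_nodup (x : Perm α) (u : α) : (cyL x u).Nodup := by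
  refine List.Nodup.map_on ?_ List.nodup_range'
  intro i hi j hj h
  simp at hi hj
  exact it_inj x u hi hj h

theorem mem_cyL (x : Perm α) (u v : α) : v ∈ cyL x u ↔ x.SameCycle u v := by
  simp only [cyL, seg, List.mem_map, List.mem_range'_1]
  constructor
  · rintro ⟨i, _, rfl⟩; exact it_same x u i
  · intro h
    obtain ⟨i, hi, e⟩ := same_it x u v h
    exact ⟨i, by omega, e⟩

theorem cyL_len (x : Perm α) (u : α) : (cyL x u).length = cl x u := seg_len _ _ _ _

theorem cyL_apply (x : Perm α) (u v : α) (h : x.SameCycle u v) : (cyL x u).formPerm v = x v := by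
  obtain ⟨i, hi, rfl⟩ := same_it x u v h
  have hi' : i < (cyL x u).length := by rwa [cyL_len]
  have e : ∀ (j : ℕ) (hj : j < (cyL x u).length), (cyL x u)[j] = x^[j] u := by
    intro j hj; simp [cyL, seg]
  have := List.formPerm_apply_getElem (cyL x u) (cyL_nodup x u) i hi'
  rw [e, e, cyL_len] at this
  rw [this, cl, Function.iterate_mod_minimalPeriod_eq, Function.iterate_succ_apply']

theorem peel (x y : Perm α) (u : α) (h : ∀ v, x.SameCycle u v → y v = x v) :
    ∃ z : Perm α, y = (cyL x u).formPerm * z ∧ (∀ v, x.SameCycle u v → z v = v) ∧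
      (∀ v, ¬ x.SameCycle u v → z v = y v) := by
  refine ⟨(cyL x u).formPerm⁻¹ * y, by simp, ?_, ?_⟩
  · intro v hv
    rw [Perm.mul_apply, h v hv, Perm.inv_eq_iff_eq, cyL_apply x u v hv]
  · intro v hv
    rw [Perm.mul_apply, Perm.inv_eq_iff_eq, List.formPerm_apply_of_notMem]
    rw [mem_cyL]
    intro h2
    have h3 : x.SameCycle u (x⁻¹ (y v)) := by
      rw [← sameCycle_apply_right]; simpa using h2
    have h4 := h _ h3
    have h5 : x (x⁻¹ (y v)) = y v := by simp
    rw [h5] at h4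
    have := y.injective h4
    rw [this] at h3
    exact hv h3

theorem rep1 (x : Perm α) (u : α) : ∃ y : Perm α, x = (cyL x u).formPerm * y ∧
    (∀ v ∈ cyL x u, y v = v) := by
  obtain ⟨z, h1, h2, _⟩ := peel x x u (fun _ _ => rfl)
  exact ⟨z, h1, fun v hv => h2 v ((mem_cyL _ _ _).1 hv)⟩

theorem rep2 (x : Perm α) (u w : α) (h : ¬ x.SameCycle u w) : ∃ y : Perm α,
    x = (cyL x u).formPerm * ((cyL x w).formPerm * y) ∧
    (∀ v ∈ cyL x u ++ cyL x w, y v = v) ∧ (cyL x u ++ cyL x w).Nodup := by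
  obtain ⟨z, h1, h2, h3⟩ := peel x x u (fun _ _ => rfl)
  have d : ∀ v, x.SameCycle w v → ¬ x.SameCycle u v := fun v hv hu => h (hu.trans hv.symm)
  obtain ⟨z', h1', h2', h3'⟩ := peel x z w (fun v hv => h3 v (d v hv))
  refine ⟨z', by rw [← h1', ← h1], ?_, ?_⟩
  · intro v hv
    rw [List.mem_append, mem_cyL, mem_cyL] at hv
    rcases hv with hv | hv
    · rw [h3' v (fun hw => d v hw hv), h2 v hv]
    · exact h2' v hv
  · rw [List.nodup_append']
    refine ⟨cyL_nodup _ _, cyL_nodup _ _, ?_⟩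
    intro v hv hw
    rw [mem_cyL] at hv hw
    exact d v hw hv

theorem rep3 (x : Perm α) (u v w : α) (h : ¬ x.SameCycle u v) (h' : ¬ x.SameCycle u w)
    (h'' : ¬ x.SameCycle v w) : ∃ y : Perm α,
    x = (cyL x u).formPerm * ((cyL x v).formPerm * ((cyL x w).formPerm * y)) ∧
    (∀ z ∈ cyL x u ++ (cyL x v ++ cyL x w), y z = z) ∧ (cyL x u ++ (cyL x v ++ cyL x w)).Nodup := by
  obtain ⟨z, h1, h2, h3⟩ := peel x x u (fun _ _ => rfl)
  have d : ∀ z, x.SameCycle v z → ¬ x.SameCycle u z := fun z hv hu => h (hu.trans hv.symm)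
  have d' : ∀ z, x.SameCycle w z → ¬ x.SameCycle u z := fun z hv hu => h' (hu.trans hv.symm)
  have d'' : ∀ z, x.SameCycle w z → ¬ x.SameCycle v z := fun z hv hu => h'' (hu.trans hv.symm)
  obtain ⟨z', h1', h2', h3'⟩ := peel x z v (fun a hv => h3 a (d a hv))
  obtain ⟨z'', h1'', h2'', h3''⟩ := peel x z' w (fun a hv => by rw [h3' a (d'' a hv), h3 a (d' a hv)])
  refine ⟨z'', by rw [← h1'', ← h1', ← h1], ?_, ?_⟩
  · intro a hv
    rw [List.mem_append, List.mem_append, mem_cyL, mem_cyL, mem_cyL] at hv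
    rcases hv with hv | hv | hv
    · rw [h3'' a (fun hw => d' a hw hv), h3' a (fun hw => d a hw hv), h2 a hv]
    · rw [h3'' a (fun hw => d'' a hw hv), h2' a hv]
    · exact h2'' a hv
  · rw [List.nodup_append', List.nodup_append']
    refine ⟨cyL_nodup _ _, ⟨cyL_nodup _ _, cyL_nodup _ _, ?_⟩, ?_⟩
    · intro a hv hw
      rw [mem_cyL] at hv hw
      exact d'' a hw hv
    · intro a hv hw
      rw [List.mem_append] at hw
      rw [mem_cyL] at hv hw
      rw [mem_cyL] at hw
      rcases hw with hw | hw
      · exact d a hw hv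
      · exact d' a hw hv

theorem mem_pts (x : Perm α) (u : α) : cl x u ∈ pts x := by
  obtain ⟨y, h1, h2⟩ := rep1 x u
  have hne : cyL x u ≠ [] := by
    intro h; have := cyL_len x u; rw [h] at this; have := cl_pos x u; simp at *; omega
  have h3 := pts_mul (cyL x u) (cyL_nodup x u) hne y h2
  rw [← h1, cyL_len] at h3
  have h4 : cl x u ∈ pts x + Multiset.replicate (cl x u) 1 := by rw [h3]; simp
  rw [Multiset.mem_add] at h4
  rcases h4 with h4 | h4
  · exact h4
  · skip
    have h5 : cl x u = 1 := Multiset.eq_of_mem_replicate h4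
    have h6 : (cyL x u).length = 1 := by rw [cyL_len, h5]
    obtain ⟨a, ha⟩ := List.length_eq_one_iff.1 h6
    have h7 : x = y := by rw [h1, ha]; simp
    have h8 : x u = u := by
      have : u ∈ cyL x u := (mem_cyL _ _ _).2 (SameCycle.refl _ _)
      have := h2 u this
      rwa [← h7] at this
    rw [h5, pts, parts_partition, Multiset.mem_add]
    right
    rw [Multiset.mem_replicate]
    refine ⟨?_, rfl⟩
    have : x.support.card < Fintype.card α := by
      apply Finset.card_lt_univ_of_notMem (x := u)
      simp [h8]
    omega

theorem pts_mul2 (k l : List α) (h : (k ++ l).Nodup) (hk : k ≠ []) (hl : l ≠ []) (y : Perm α)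
    (hy : ∀ a ∈ k ++ l, y a = a) :
    pts (k.formPerm * (l.formPerm * y)) + Multiset.replicate (k.length + l.length) 1
      = k.length ::ₘ l.length ::ₘ pts y := by
  have hh := List.nodup_append'.1 h
  have h1 := pts_mul l hh.2.1 hl y (fun a ha => hy a (by simp [ha]))
  have h2 := pts_mul k hh.1 hk (l.formPerm * y) (fun a ha => by
    rw [Perm.mul_apply, hy a (by simp [ha]), List.formPerm_apply_of_notMem (hh.2.2 ha)])
  rw [Multiset.replicate_add, ← add_assoc, h2, Multiset.cons_add, h1]

theorem pts_mul3 (j k l : List α) (h : (j ++ (k ++ l)).Nodup) (hj : j ≠ []) (hk : k ≠ []) (hl : l ≠ []) (y : Perm α)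
    (hy : ∀ a ∈ j ++ (k ++ l), y a = a) :
    pts (j.formPerm * (k.formPerm * (l.formPerm * y))) + Multiset.replicate (j.length + k.length + l.length) 1
      = j.length ::ₘ k.length ::ₘ l.length ::ₘ pts y := by
  have hh := List.nodup_append'.1 h
  have h1 := pts_mul2 k l hh.2.1 hk hl y (fun a ha => hy a (List.mem_append_right _ ha))
  have h2 := pts_mul j hh.1 hj (k.formPerm * (l.formPerm * y)) (fun a ha => by
    have this : a ∉ k ++ l := hh.2.2 ha
    rw [List.mem_append, not_or] at this
    rw [Perm.mul_apply, Perm.mul_apply, hy a (List.mem_append_left _ ha), List.formPerm_apply_of_notMem this.2,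
      List.formPerm_apply_of_notMem this.1])
  rw [add_assoc, Multiset.replicate_add, ← add_assoc, h2, Multiset.cons_add, h1]

theorem move_good (x : Perm α) (u : α) (i j : ℕ) (hi : 0 < i) (hij : i < j) (hj : j < cl x u) :
    pts (TT u (x^[i] u) (x^[j] u) * x) = i ::ₘ (j - i) ::ₘ (cl x u - j) ::ₘ (pts x).erase (cl x u) := by
  obtain ⟨y, h1, h2⟩ := rep1 x u
  have e : cyL x u = seg x u 0 i ++ (seg x u i (j - i) ++ seg x u j (cl x u - j)) := by
    have := seg_app x u i (j - i) (cl x u - j)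
    rw [show i + (j - i) = j by omega] at this
    rw [this]
    have := seg_app x u 0 i (j - i + (cl x u - j))
    rw [zero_add] at this
    rw [this, cyL]; congr 1; omega
  have hn := cyL_nodup x u
  have m1 := pts_mul (cyL x u) hn (by rw [e, seg_cons _ _ _ _ hi]; simp) y h2
  rw [← h1, cyL_len, ← Multiset.cons_erase (mem_pts x u), Multiset.cons_add, Multiset.cons_inj_right] at m1
  rw [e] at hn h2
  have m2 := pts_mul3 _ _ _ hn (by rw [seg_cons _ _ _ _ hi]; simp) (by rw [seg_cons _ _ _ _ (by omega)]; simp)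
    (by rw [seg_cons _ _ _ _ (by omega)]; simp) y h2
  rw [← m1, seg_len, seg_len, seg_len, show i + (j - i) + (cl x u - j) = cl x u by omega,
    ← Multiset.cons_add, ← Multiset.cons_add, ← Multiset.cons_add, add_left_inj] at m2
  rw [← m2]
  congr 1
  conv_lhs => arg 2; rw [h1, e]
  rw [seg_cons _ _ 0 _ hi, seg_cons _ _ i _ (by omega), seg_cons _ _ j _ (by omega)] at hn ⊢
  rw [← mul_assoc]
  have := T_good _ _ _ _ _ _ hn
  simp only [Function.iterate_zero, id_eq] at this ⊢
  rw [this]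
  simp only [mul_assoc]

theorem move_bad (x : Perm α) (u : α) (i j : ℕ) (hi : 0 < i) (hij : i < j) (hj : j < cl x u) :
    pts (TT u (x^[j] u) (x^[i] u) * x) = pts x := by
  obtain ⟨y, h1, h2⟩ := rep1 x u
  have e : cyL x u = seg x u 0 i ++ seg x u i (j - i) ++ seg x u j (cl x u - j) := by
    have := seg_app x u 0 i (j - i)
    rw [zero_add] at this
    rw [this]
    have := seg_app x u 0 (i + (j - i)) (cl x u - j)
    rw [show 0 + (i + (j - i)) = j by omega] at this
    rw [this, cyL]; congr 1; omega
  have hn := cyL_nodup x u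
  have m1 := pts_mul (cyL x u) hn (by rw [e, seg_cons _ _ _ _ hi]; simp) y h2
  rw [← h1, cyL_len] at m1
  rw [e] at hn h2
  have hp : List.Perm (seg x u 0 i ++ seg x u i (j - i) ++ seg x u j (cl x u - j))
    (seg x u i (j - i) ++ seg x u 0 i ++ seg x u j (cl x u - j)) := List.Perm.append_right _ List.perm_append_comm
  have m2 := pts_mul (seg x u i (j - i) ++ seg x u 0 i ++ seg x u j (cl x u - j)) (hp.nodup_iff.1 hn)
    (by rw [seg_cons _ _ 0 _ hi]; simp) y (fun a ha => h2 a (hp.mem_iff.2 ha))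
  rw [← hp.length_eq, ← e, cyL_len, ← m1, add_left_inj] at m2
  rw [← m2]
  congr 1
  conv_lhs => arg 2; rw [h1, e]
  rw [seg_cons _ _ 0 _ hi, seg_cons _ _ i _ (by omega), seg_cons _ _ j _ (by omega)] at hn ⊢
  rw [← mul_assoc]
  have := T_bad _ _ _ _ _ _ hn
  simp only [Function.iterate_zero, id_eq] at this ⊢
  rw [this]

theorem move_two (x : Perm α) (u w : α) (hw : ¬ x.SameCycle u w) (i : ℕ) (hi : 0 < i) (hj : i < cl x u) :
    (pts x = cl x u ::ₘ cl x w ::ₘ ((pts x).erase (cl x u)).erase (cl x w)) ∧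
    pts (TT u (x^[i] u) w * x) = i ::ₘ (cl x u - i + cl x w) ::ₘ ((pts x).erase (cl x u)).erase (cl x w) := by
  obtain ⟨y, h1, h2, hn⟩ := rep2 x u w hw
  have e : cyL x u = seg x u 0 i ++ seg x u i (cl x u - i) := by
    have := seg_app x u 0 i (cl x u - i)
    rw [zero_add] at this
    rw [this, cyL]; congr 1; omega
  have e2 := seg_cons x w 0 (cl x w) (cl_pos _ _)
  have m1 := pts_mul2 _ _ hn (by rw [e, seg_cons _ _ _ _ hi]; simp) (by rw [cyL, e2]; simp) y h2
  rw [← h1, cyL_len, cyL_len] at m1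
  have hmem : pts x = cl x u ::ₘ cl x w ::ₘ ((pts x).erase (cl x u)).erase (cl x w) := by
    have h3 : cl x w ∈ (pts x).erase (cl x u) := by
      by_cases hc : cl x w = cl x u
      · rw [← Multiset.count_pos, hc, Multiset.count_erase_self]
        have := congrArg (Multiset.count (cl x u)) m1
        rw [hc, Multiset.count_add, Multiset.count_cons_self, Multiset.count_cons_self, Multiset.count_replicate] at this
        split_ifs at this with h5
        · skip
          rw [← h5] at this ⊢ 
          rw [← h5] at hc
          have f : ∀ z, cl x z = 1 → x z = z := fun z hz => Function.minimalPeriod_eq_one_iff_isFixedPt.1 hz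
          have hu := f u h5.symm
          have hw' := f w hc
          have hne : u ≠ w := by rintro rfl; exact hw (SameCycle.refl _ _)
          rw [pts, parts_partition, Multiset.count_add, Multiset.count_replicate_self]
          have : x.support.card + ({u, w} : Finset α).card ≤ Fintype.card α := by
            rw [← Finset.card_union_of_disjoint]
            · exact Finset.card_le_univ _
            · rw [Finset.disjoint_right]; intro a ha; simp at ha; rcases ha with ha | ha
              · rw [ha]; simp [hu]
              · rw [ha]; simp [hw']
          rw [Finset.card_pair hne] at this
          omega
        · omega
      · rw [Multiset.mem_erase_of_ne hc]; exact mem_pts x w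
    rw [Multiset.cons_erase h3, Multiset.cons_erase (mem_pts x u)]
  refine ⟨hmem, ?_⟩
  rw [hmem, Multiset.cons_add, Multiset.cons_add, Multiset.cons_inj_right, Multiset.cons_inj_right] at m1
  have hn' := hn
  rw [e, List.append_assoc] at hn
  rw [e, List.append_assoc] at h2
  have m2 := pts_mul2 (seg x u 0 i) (seg x u i (cl x u - i) ++ cyL x w) hn (by rw [seg_cons _ _ _ _ hi]; simp)
    (by rw [seg_cons _ _ _ _ (by omega)]; simp) y h2
  rw [← m1, List.length_append, seg_len, seg_len, cyL_len, show i + (cl x u - i + cl x w) = cl x u + cl x w by omega,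
    ← Multiset.cons_add, ← Multiset.cons_add, add_left_inj] at m2
  rw [← m2]
  congr 1
  conv_lhs => arg 2; rw [h1, e]
  rw [cyL, seg_cons _ _ 0 _ hi, seg_cons _ _ i _ (by omega), e2] at hn ⊢
  have := T_two _ _ _ _ _ _ hn
  simp only [Function.iterate_zero, id_eq] at this ⊢
  rw [← mul_assoc _ _ y, ← mul_assoc, this]
  simp only [mul_assoc]

theorem move_three (x : Perm α) (u v w : α) (h : ¬ x.SameCycle u v) (h' : ¬ x.SameCycle u w)
    (h'' : ¬ x.SameCycle v w) :
    ∃ Q, pts (TT u v w * x) = (cl x u + cl x v + cl x w) ::ₘ Q ∧ pts x = cl x u ::ₘ cl x v ::ₘ cl x w ::ₘ Q := by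
  obtain ⟨y, h1, h2, hn⟩ := rep3 x u v w h h' h''
  have eu := seg_cons x u 0 (cl x u) (cl_pos _ _)
  have ev := seg_cons x v 0 (cl x v) (cl_pos _ _)
  have ew := seg_cons x w 0 (cl x w) (cl_pos _ _)
  have m1 := pts_mul3 _ _ _ hn (by rw [cyL, eu]; simp) (by rw [cyL, ev]; simp) (by rw [cyL, ew]; simp) y h2
  have hp : List.Perm (cyL x u ++ (cyL x v ++ cyL x w)) (cyL x v ++ cyL x u ++ cyL x w) := by
    rw [← List.append_assoc]
    exact List.Perm.append_right _ List.perm_append_comm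
  have m2 := pts_mul (cyL x v ++ cyL x u ++ cyL x w) (hp.nodup_iff.1 hn)
    (by rw [cyL, ev]; simp) y (fun a ha => h2 a (hp.mem_iff.2 ha))
  have e3 : TT u v w * x = (cyL x v ++ cyL x u ++ cyL x w).formPerm * y := by
    conv_lhs => rw [h1]
    rw [cyL, cyL, cyL, eu, ev, ew] at hn ⊢
    have := T_three _ _ _ _ _ _ hn
    simp only [Function.iterate_zero, id_eq] at this ⊢
    rw [← this]
    simp only [mul_assoc]
  rw [← e3, List.length_append, List.length_append] at m2
  rw [← h1] at m1
  simp only [cyL_len] at m1 m2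
  rw [add_comm (cl x v)] at m2
  have hm : cl x u + cl x v + cl x w ∈ pts (TT u v w * x) := by
    have : cl x u + cl x v + cl x w ∈ pts (TT u v w * x) + Multiset.replicate (cl x u + cl x v + cl x w) 1 := by
      rw [m2]; simp
    rw [Multiset.mem_add] at this
    rcases this with h4 | h4
    · exact h4
    · have := Multiset.eq_of_mem_replicate h4
      have := cl_pos x u
      have := cl_pos x v
      have := cl_pos x w
      omega
  refine ⟨_, (Multiset.cons_erase hm).symm, ?_⟩
  rw [← Multiset.cons_erase hm, Multiset.cons_add, Multiset.cons_inj_right] at m2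
  rw [← m2, ← Multiset.cons_add, ← Multiset.cons_add, ← Multiset.cons_add, add_left_inj] at m1
  exact m1

theorem move_cases_aux (x : Perm α) (u v w : α) (h1 : u ≠ v) (h2 : v ≠ w) (h3 : u ≠ w) (hs : x.SameCycle u v) :
    (∃ i j k Q, 0 < i ∧ 0 < j ∧ 0 < k ∧ pts x = (i + j + k) ::ₘ Q ∧ pts (TT u v w * x) = i ::ₘ j ::ₘ k ::ₘ Q) ∨
    pts (TT u v w * x) = pts x ∨
    (∃ d e l Q, pts x = (d + e) ::ₘ l ::ₘ Q ∧ pts (TT u v w * x) = d ::ₘ (e + l) ::ₘ Q) := by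
  obtain ⟨i, hi, rfl⟩ := same_it x u v hs
  have hi0 : 0 < i := by
    rcases Nat.eq_zero_or_pos i with rfl | h
    · simp at h1
    · exact h
  by_cases hw : x.SameCycle u w
  · obtain ⟨j, hj, rfl⟩ := same_it x u w hw
    have hj0 : 0 < j := by
      rcases Nat.eq_zero_or_pos j with rfl | h
      · simp at h3
      · exact h
    rcases lt_trichotomy i j with h | h | h
    · left
      refine ⟨i, j - i, cl x u - j, (pts x).erase (cl x u), hi0, by omega, by omega, ?_, move_good x u i j hi0 h hj⟩
      rw [show i + (j - i) + (cl x u - j) = cl x u by omega, Multiset.cons_erase (mem_pts x u)]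
    · subst h; exact absurd rfl h2
    · right; left
      exact move_bad x u j i hj0 h hi
  · right; right
    obtain ⟨e1, e2⟩ := move_two x u w hw i hi0 hi
    refine ⟨i, cl x u - i, cl x w, _, ?_, e2⟩
    rw [show i + (cl x u - i) = cl x u by omega]; exact e1

theorem move_cases (x : Perm α) (u v w : α) (h1 : u ≠ v) (h2 : v ≠ w) (h3 : u ≠ w) :
    (∃ i j k Q, 0 < i ∧ 0 < j ∧ 0 < k ∧ pts x = (i + j + k) ::ₘ Q ∧ pts (TT u v w * x) = i ::ₘ j ::ₘ k ::ₘ Q) ∨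
    pts (TT u v w * x) = pts x ∨
    (∃ d e l Q, pts x = (d + e) ::ₘ l ::ₘ Q ∧ pts (TT u v w * x) = d ::ₘ (e + l) ::ₘ Q) ∨
    (∃ a b c Q, pts x = a ::ₘ b ::ₘ c ::ₘ Q ∧ pts (TT u v w * x) = (a + b + c) ::ₘ Q) := by
  by_cases s1 : x.SameCycle u v
  · have := move_cases_aux x u v w h1 h2 h3 s1
    rcases this with h | h | h
    · exact Or.inl h
    · exact Or.inr (Or.inl h)
    · exact Or.inr (Or.inr (Or.inl h))
  by_cases s2 : x.SameCycle v w
  · have := move_cases_aux x v w u h2 h3.symm h1.symm s2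
    rw [← TT_rot u v w h1 h2 h3] at this
    rcases this with h | h | h
    · exact Or.inl h
    · exact Or.inr (Or.inl h)
    · exact Or.inr (Or.inr (Or.inl h))
  by_cases s3 : x.SameCycle u w
  · have := move_cases_aux x w u v h3.symm h1 h2.symm s3.symm
    rw [TT_rot w u v h3.symm h1 h2.symm] at this
    rcases this with h | h | h
    · exact Or.inl h
    · exact Or.inr (Or.inl h)
    · exact Or.inr (Or.inr (Or.inl h))
  obtain ⟨Q, e1, e2⟩ := move_three x u v w s1 s3 s2
  exact Or.inr (Or.inr (Or.inr ⟨_, _, _, Q, e2, e1⟩))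

def no (M : Multiset ℕ) : ℕ := M.countP Odd
def ne (M : Multiset ℕ) : ℕ := M.countP Even

theorem no_cons (a : ℕ) (M : Multiset ℕ) : no (a ::ₘ M) = no M + a % 2 := by
  rw [no, no, Multiset.countP_cons]
  rcases Nat.even_or_odd a with h | h
  · rw [if_neg (by simpa using h), Nat.even_iff.1 h]
  · rw [if_pos h, Nat.odd_iff.1 h]

theorem ne_cons (a : ℕ) (M : Multiset ℕ) : ne (a ::ₘ M) = ne M + (1 - a % 2) := by
  rw [ne, ne, Multiset.countP_cons]
  rcases Nat.even_or_odd a with h | h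
  · rw [if_pos h, Nat.even_iff.1 h]
  · rw [if_neg (by simpa using h), Nat.odd_iff.1 h]

theorem move_no (x : Perm α) (u v w : α) (h1 : u ≠ v) (h2 : v ≠ w) (h3 : u ≠ w) :
    no (pts (TT u v w * x)) ≤ no (pts x) + 2 ∧ (no (pts (TT u v w * x)) = no (pts x) + 2 →
      ne (pts (TT u v w * x)) = ne (pts x) ∨ ne (pts (TT u v w * x)) + 2 = ne (pts x)) := by
  rcases move_cases x u v w h1 h2 h3 with ⟨i, j, k, Q, _, _, _, e1, e2⟩ | e | ⟨d, e, l, Q, e1, e2⟩ | ⟨a, b, c, Q, e1, e2⟩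
  · rw [e1, e2]; simp only [no_cons, ne_cons]; omega
  · rw [e]; omega
  · rw [e1, e2]; simp only [no_cons, ne_cons]; omega
  · rw [e1, e2]; simp only [no_cons, ne_cons]; omega

theorem sum_same (x : Perm α) (u : α) (G : α → ℚ) :
    ∑ v, (if x.SameCycle u v then G v else 0) = ∑ i ∈ Finset.range (cl x u), G (x^[i] u) := by
  rw [← Finset.sum_filter]
  symm
  refine Finset.sum_bij (fun i _ => x^[i] u) ?_ ?_ ?_ ?_
  · intro i _; simp [it_same]
  · intro i hi j hj h
    exact it_inj x u (Finset.mem_range.1 hi) (Finset.mem_range.1 hj) h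
  · intro v hv
    obtain ⟨i, hi, e⟩ := same_it x u v (Finset.mem_filter.1 hv).2
    exact ⟨i, Finset.mem_range.2 hi, e⟩
  · intros; rfl

theorem cl_same (x : Perm α) (u v : α) (h : x.SameCycle u v) : cl x v = cl x u := by
  obtain ⟨i, hi, rfl⟩ := same_it x u v h
  exact Function.minimalPeriod_apply_iterate (Function.Injective.mem_periodicPts x.injective u) i

theorem cl_supp (x : Perm α) (u : α) (h : x u ≠ u) : cl x u = (x.cycleOf u).support.card := by
  rw [← cyL_len, ← List.toFinset_card_of_nodup (cyL_nodup x u)]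
  congr 1
  ext v
  rw [List.mem_toFinset, mem_cyL, mem_support_cycleOf_iff' h]

theorem S1 (x : Perm α) (g : ℕ → ℚ) :
    ∑ u, g (cl x u) = ((pts x).map (fun l : ℕ => (l : ℚ) * g l)).sum := by
  rw [pts, parts_partition, Multiset.map_add, Multiset.sum_add, Multiset.map_replicate, Multiset.sum_replicate,
    cycleType_def, Multiset.map_map]
  rw [← Finset.sum_add_sum_compl x.support]
  congr 1
  · rw [← Finset.sum_fiberwise_of_maps_to (s := x.support) (t := x.cycleFactorsFinset) (g := fun u => x.cycleOf u)]
    · change _ = ∑ c ∈ x.cycleFactorsFinset, _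
      apply Finset.sum_congr rfl
      intro c hc
      have : (x.support.filter fun u => x.cycleOf u = c) = c.support := by
        ext u
        rw [Finset.mem_filter]
        constructor
        · rintro ⟨h, rfl⟩
          rw [mem_support_cycleOf_iff' (mem_support.1 h)]
        · intro h
          have h' := (mem_cycleFactorsFinset_support_le hc) h
          exact ⟨h', (cycle_is_cycleOf h hc).symm⟩
      rw [this, Finset.sum_congr rfl (g := fun _ => g c.support.card), Finset.sum_const]
      · simp
      · intro u hu
        have h' := (mem_cycleFactorsFinset_support_le hc) hu
        rw [cl_supp x u (mem_support.1 h'), ← cycle_is_cycleOf hu hc]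
    · intro u hu
      rw [cycleOf_mem_cycleFactorsFinset_iff]; exact hu
  · rw [Finset.sum_congr rfl (g := fun _ => g 1), Finset.sum_const, Finset.card_compl]
    · simp
    · intro u hu
      congr 1
      rw [Finset.mem_compl, notMem_support] at hu
      exact Function.minimalPeriod_eq_one_iff_isFixedPt.2 hu

noncomputable def AA (f : Multiset ℕ → ℚ) (M : Multiset ℕ) (l : ℕ) : ℚ :=
  ∑ i ∈ Finset.range l, ∑ j ∈ Finset.range l,
    if 0 < i ∧ i < j then f (i ::ₘ (j - i) ::ₘ (l - j) ::ₘ M.erase l) else 0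

noncomputable def BB (f : Multiset ℕ → ℚ) (M : Multiset ℕ) (l l' : ℕ) : ℚ :=
  ∑ i ∈ Finset.range l, if 0 < i then f (i ::ₘ (l - i + l') ::ₘ (M.erase l).erase l') else 0

theorem triple_sum (x : Perm α) (f : Multiset ℕ → ℚ) (hf0 : f (pts x) = 0)
    (hf3 : ∀ a b c Q, pts x = a ::ₘ b ::ₘ c ::ₘ Q → f ((a + b + c) ::ₘ Q) = 0) :
    ∑ u, ∑ v, ∑ w, (if u ≠ v ∧ v ≠ w ∧ u ≠ w then f (pts (TT u v w * x)) else 0)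
      = ∑ u, AA f (pts x) (cl x u)
        + 3 * ∑ u, (∑ w, BB f (pts x) (cl x u) (cl x w) - cl x u * BB f (pts x) (cl x u) (cl x u)) := by
  set F : α → α → α → ℚ := fun u v w => f (pts (TT u v w * x)) with hF
  set G : α → α → α → ℚ := fun u v w => if x.SameCycle u v ∧ ¬ x.SameCycle u w ∧ u ≠ v then F u v w else 0 with hG
  set H : α → α → α → ℚ := fun u v w => if x.SameCycle u v ∧ x.SameCycle u w ∧ u ≠ v ∧ v ≠ w ∧ u ≠ w then F u v w else 0 with hH
  have key : ∀ u v w, (if u ≠ v ∧ v ≠ w ∧ u ≠ w then F u v w else 0) = H u v w + G u v w + G v w u + G w u v := by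
    intro u v w
    have r1 : u ≠ v → v ≠ w → u ≠ w → F v w u = F u v w := fun a b c => by simp only [hF]; rw [← TT_rot u v w a b c]
    have r2 : u ≠ v → v ≠ w → u ≠ w → F w u v = F u v w := fun a b c => by
      simp only [hF]; rw [TT_rot w u v c.symm a b.symm]
    have s1 : ∀ a b, x.SameCycle a b → x.SameCycle b a := fun a b h => h.symm
    have s2 : ∀ a b c, x.SameCycle a b → x.SameCycle b c → x.SameCycle a c := fun a b c h h' => h.trans h'
    have z : ¬ x.SameCycle u v → ¬ x.SameCycle u w → ¬ x.SameCycle v w → F u v w = 0 := by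
      intro a b c
      obtain ⟨Q, e1, e2⟩ := move_three x u v w a b c
      simp only [hF]
      rw [e1]; exact hf3 _ _ _ _ e2
    have s3 : ∀ a, x.SameCycle a a := fun a => SameCycle.refl _ _
    simp only [hG, hH]
    by_cases a : x.SameCycle u v <;> by_cases b : x.SameCycle v w <;> by_cases c : x.SameCycle u w <;>
      grind
  have rot : ∀ G : α → α → α → ℚ, ∑ u, ∑ v, ∑ w, G v w u = ∑ u, ∑ v, ∑ w, G u v w := by
    intro G
    rw [Finset.sum_comm]
    refine Finset.sum_congr rfl fun v _ => ?_
    rw [Finset.sum_comm]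
  have e : ∑ u, ∑ v, ∑ w, (if u ≠ v ∧ v ≠ w ∧ u ≠ w then F u v w else 0)
      = ∑ u, ∑ v, ∑ w, H u v w + 3 * ∑ u, ∑ v, ∑ w, G u v w := by
    simp only [key, Finset.sum_add_distrib]
    have r1 := rot G
    have r2 := rot (fun u v w => G w u v)
    beta_reduce at r2
    rw [r1, ← r2]
    ring
  rw [e]
  refine congrArg₂ (· + ·) ?_ (congrArg (3 * ·) ?_)
  · refine Finset.sum_congr rfl fun u _ => ?_
    have : ∀ v w, H u v w = if x.SameCycle u v then (if x.SameCycle u w then (if u ≠ v ∧ v ≠ w ∧ u ≠ w then F u v w else 0) else 0) else 0 := by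
      intro v w; simp only [hH]; grind
    simp only [this]
    have t2 : ∀ v, (∑ w, if x.SameCycle u v then (if x.SameCycle u w then (if u ≠ v ∧ v ≠ w ∧ u ≠ w then F u v w else 0) else 0) else 0)
      = if x.SameCycle u v then ∑ w, (if x.SameCycle u w then (if u ≠ v ∧ v ≠ w ∧ u ≠ w then F u v w else 0) else 0) else 0 := by
      intro v; split_ifs <;> simp
    simp only [t2]
    rw [sum_same x u]
    simp only [sum_same x u]
    rw [AA]
    refine Finset.sum_congr rfl fun i hi => Finset.sum_congr rfl fun j hj => ?_
    rw [Finset.mem_range] at hi hj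
    have q1 : u ≠ x^[i] u ↔ 0 < i := by
      rw [Nat.pos_iff_ne_zero, ne_comm, not_iff_not]
      exact ⟨fun h => it_inj x u hi (cl_pos x u) h, fun h => by rw [h]; rfl⟩
    have q2 : u ≠ x^[j] u ↔ 0 < j := by
      rw [Nat.pos_iff_ne_zero, ne_comm, not_iff_not]
      exact ⟨fun h => it_inj x u hj (cl_pos x u) h, fun h => by rw [h]; rfl⟩
    have q3 : x^[i] u ≠ x^[j] u ↔ i ≠ j := by
      rw [not_iff_not]
      exact ⟨fun h => it_inj x u hi hj h, fun h => by rw [h]⟩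
    simp only [q1, q2, q3]
    simp only [hF]
    by_cases c1 : 0 < i ∧ i < j
    · rw [if_pos (by omega), if_pos c1, move_good x u i j c1.1 c1.2 hj]
    · rw [if_neg c1]
      split_ifs with c2
      · rw [move_bad x u j i c2.2.2 (by omega) hi, hf0]
      · rfl
  · refine Finset.sum_congr rfl fun u _ => ?_
    rw [Finset.sum_comm]
    have t3 : ∑ w, (if x.SameCycle u w then BB f (pts x) (cl x u) (cl x w) else 0)
        = cl x u * BB f (pts x) (cl x u) (cl x u) := by
      rw [sum_same, Finset.sum_congr rfl (g := fun _ => BB f (pts x) (cl x u) (cl x u))]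
      · simp
      · intro i _; rw [cl_same x u _ (it_same x u i)]
    rw [← t3, ← Finset.sum_sub_distrib]
    refine Finset.sum_congr rfl fun w _ => ?_
    by_cases hw : x.SameCycle u w
    · simp [hG, hw]
    · simp only [if_neg hw, sub_zero]
      have : ∀ v, G u v w = if x.SameCycle u v then (if u ≠ v then F u v w else 0) else 0 := by
        intro v; simp only [hG]; grind
      simp only [this]
      rw [sum_same x u, BB]
      refine Finset.sum_congr rfl fun i hi => ?_
      rw [Finset.mem_range] at hi
      have q1 : u ≠ x^[i] u ↔ 0 < i := by
        rw [Nat.pos_iff_ne_zero, ne_comm, not_iff_not]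
        exact ⟨fun h => it_inj x u hi (cl_pos x u) h, fun h => by rw [h]; rfl⟩
      simp only [q1]
      split_ifs with c
      · exact congrArg f (move_two x u w hw i c hi).2
      · rfl

theorem triple_sum' (x : Perm α) (f : Multiset ℕ → ℚ) (hf0 : f (pts x) = 0)
    (hf3 : ∀ a b c Q, pts x = a ::ₘ b ::ₘ c ::ₘ Q → f ((a + b + c) ::ₘ Q) = 0) :
    ∑ u, ∑ v, ∑ w, (if u ≠ v ∧ v ≠ w ∧ u ≠ w then f (pts (TT u v w * x)) else 0)
      = ((pts x).map (fun l : ℕ => (l : ℚ) * (AA f (pts x) l +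
         3 * (((pts x).map (fun l' : ℕ => (l' : ℚ) * BB f (pts x) l l')).sum - l * BB f (pts x) l l)))).sum := by
  rw [triple_sum x f hf0 hf3, ← S1, Finset.mul_sum, ← Finset.sum_add_distrib]
  refine Finset.sum_congr rfl fun u _ => ?_
  rw [S1 x (fun l' => BB f (pts x) (cl x u) l')]

end comb

def ES (M : Multiset ℕ) : ℚ := ((M.filter Even).sum : ℕ)

def psi (M : Multiset ℕ) : ℚ := (M.map om).prod * (if ne M = 0 then 1 else 4 / ES M)

theorem psi_odd (l : ℕ) (hl : l % 2 = 1) (R : Multiset ℕ) : psi (l ::ₘ R) = om l * psi R := by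
  have h : ¬ Even l := by rw [Nat.even_iff]; omega
  rw [psi, psi, ne_cons, ES, ES, Multiset.filter_cons_of_neg _ h, hl]
  simp [mul_assoc]

def ff (K : ℕ) (M : Multiset ℕ) : ℚ := if no M = K then psi M else 0

theorem par_sum (l m e1 e2 e3 : ℕ) (h1 : e1 ≤ 1) (h2 : e2 ≤ 1) (h3 : e3 ≤ 1) (hl : l = 2 * m + e1 + e2 + e3)
    (g : ℕ → ℕ → ℕ → ℚ) :
    ∑ i ∈ Finset.range l, ∑ j ∈ Finset.range l,
      (if (0 < i ∧ i < j) ∧ i % 2 = e1 ∧ (j - i) % 2 = e2 ∧ (l - j) % 2 = e3 then g i (j - i) (l - j) else 0)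
    = ∑ x ∈ Finset.HasAntidiagonal.antidiagonal m, ∑ y ∈ Finset.HasAntidiagonal.antidiagonal x.2,
      (if 0 < 2 * x.1 + e1 ∧ 0 < 2 * y.1 + e2 ∧ 0 < 2 * y.2 + e3 then
        g (2 * x.1 + e1) (2 * y.1 + e2) (2 * y.2 + e3) else 0) := by
  rw [← Finset.sum_product', Finset.sum_sigma', ← Finset.sum_filter, ← Finset.sum_filter]
  refine Finset.sum_bij' (fun s _ => ⟨(s.1 / 2, m - s.1 / 2), ((s.2 - s.1) / 2, (l - s.2) / 2)⟩)
    (fun s _ => (2 * s.1.1 + e1, 2 * s.1.1 + e1 + 2 * s.2.1 + e2)) ?_ ?_ ?_ ?_ ?_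
  · rintro ⟨i, j⟩ h
    simp only [Finset.mem_filter, Finset.mem_product, Finset.mem_range, Finset.mem_sigma, Finset.HasAntidiagonal.mem_antidiagonal] at h ⊢
    omega
  · rintro ⟨⟨a, b⟩, ⟨c, d⟩⟩ h
    simp only [Finset.mem_filter, Finset.mem_product, Finset.mem_range, Finset.mem_sigma, Finset.HasAntidiagonal.mem_antidiagonal] at h ⊢
    omega
  · rintro ⟨i, j⟩ h
    simp only [Finset.mem_filter, Finset.mem_product, Finset.mem_range, Finset.mem_sigma, Finset.HasAntidiagonal.mem_antidiagonal] at h ⊢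
    rw [Prod.mk.injEq]
    omega
  · rintro ⟨⟨a, b⟩, ⟨c, d⟩⟩ h
    simp only [Finset.mem_filter, Finset.mem_sigma, Finset.HasAntidiagonal.mem_antidiagonal] at h
    have q1 : (2 * a + e1) / 2 = a := by omega
    have q2 : m - (2 * a + e1) / 2 = b := by omega
    have q3 : (2 * a + e1 + 2 * c + e2 - (2 * a + e1)) / 2 = c := by omega
    have q4 : (l - (2 * a + e1 + 2 * c + e2)) / 2 = d := by omega
    rw [q1] at q2
    simp only [q1, q2, q3, q4]
  · rintro ⟨i, j⟩ h
    simp only [Finset.mem_filter, Finset.mem_product, Finset.mem_range] at h ⊢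
    congr 1 <;> omega

theorem om3 (m : ℕ) : ∑ x ∈ Finset.HasAntidiagonal.antidiagonal m, ∑ y ∈ Finset.HasAntidiagonal.antidiagonal x.2,
    om (2 * x.1 + 1) * om (2 * y.1 + 1) * om (2 * y.2 + 1) = abelA 2 3 m := by
  simp only [om_odd, mul_assoc, ← Finset.mul_sum]
  rw [show (3 : ℚ) = 1 + 2 by norm_num, ← abel2 1 2 2 (by norm_num) (by norm_num) (by norm_num)]
  refine Finset.sum_congr rfl fun x _ => ?_
  rw [abel2 1 1 2 (by norm_num) (by norm_num) (by norm_num)]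
  norm_num

theorem om2 (m : ℕ) : ∑ y ∈ Finset.HasAntidiagonal.antidiagonal m, om (2 * y.1 + 1) * om (2 * y.2 + 1) = abelA 2 2 m := by
  simp only [om_odd]
  rw [abel2 1 1 2 (by norm_num) (by norm_num) (by norm_num)]
  norm_num

theorem AA_odd (l k : ℕ) (hl : l = 2 * k + 1) (M R : Multiset ℕ) (hM : M = l ::ₘ R) :
    l * AA (ff (no M + 2)) M l = 3 * k * psi M := by
  rcases k with _ | k
  · rw [AA]
    simp at hl
    subst hl
    simp
  have e : AA (ff (no M + 2)) M l = psi R * abelA 2 3 k := by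
    rw [← om3, AA, hM, Multiset.erase_cons_head]
    have := par_sum l k 1 1 1 le_rfl le_rfl le_rfl (by omega) (fun a b c => om a * om b * om c * psi R)
    rw [Finset.mul_sum]
    refine Eq.trans (Eq.trans ?_ this) ?_
    · refine Finset.sum_congr rfl fun i hi => Finset.sum_congr rfl fun j hj => ?_
      rw [Finset.mem_range] at hi hj
      by_cases c : 0 < i ∧ i < j
      · rw [if_pos c, ff]
        simp only [no_cons]
        by_cases d : i % 2 = 1 ∧ (j - i) % 2 = 1 ∧ (l - j) % 2 = 1
        · rw [if_pos (by omega), if_pos ⟨c, d⟩, psi_odd _ d.1, psi_odd _ d.2.1, psi_odd _ d.2.2]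
          ring
        · rw [if_neg (by omega), if_neg (by tauto)]
      · rw [if_neg c, if_neg (by tauto)]
    · refine Finset.sum_congr rfl fun i hi => ?_
      rw [Finset.mul_sum]
      refine Finset.sum_congr rfl fun j hj => ?_
      rw [if_pos (by omega)]
      ring
  rw [e, hM, psi_odd _ (by omega), hl, om_odd, abelA, abelA, Nat.factorial_succ]
  push_cast
  have h1 : (1 : ℚ) + (k + 1) * 2 ≠ 0 := by positivity
  rw [show (3 : ℚ) + k * 2 = 1 + (k + 1) * 2 by ring, show (2 : ℚ) * (k + 1) + 1 = 1 + (k + 1) * 2 by ring, pow_succ]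
  have h2 : (k : ℚ) + 1 ≠ 0 := by positivity
  field_simp

theorem AA_even (p : ℕ) (hp : 1 ≤ p) (M R : Multiset ℕ) (hM : M = (2 * p) ::ₘ R) :
    AA (ff (no M + 2)) M (2 * p) = 3 * ∑ i ∈ Finset.HasAntidiagonal.antidiagonal (p - 1),
      abelA 2 2 i.1 * (if i.2 = 0 then 0 else psi ((2 * i.2) ::ₘ R)) := by
  set P : ℕ → ℚ := fun c => psi (c ::ₘ R) with hP
  have g1 := par_sum (2 * p) (p - 1) 1 1 0 (by omega) (by omega) (by omega) (by omega) (fun a b c => om a * om b * P c)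
  have g2 := par_sum (2 * p) (p - 1) 1 0 1 (by omega) (by omega) (by omega) (by omega) (fun a b c => om a * om c * P b)
  have g3 := par_sum (2 * p) (p - 1) 0 1 1 (by omega) (by omega) (by omega) (by omega) (fun a b c => om b * om c * P a)
  refine Eq.trans (Eq.trans ?_ (congrArg₂ (· + ·) (congrArg₂ (· + ·) g1 g2) g3)) ?_
  · beta_reduce
    rw [← Finset.sum_add_distrib, ← Finset.sum_add_distrib, AA]
    refine Finset.sum_congr rfl fun i hi => ?_
    rw [← Finset.sum_add_distrib, ← Finset.sum_add_distrib]
    refine Finset.sum_congr rfl fun j hj => ?_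
    rw [Finset.mem_range] at hi hj
    rw [hM, Multiset.erase_cons_head]
    by_cases c : 0 < i ∧ i < j
    · rw [if_pos c, ff]
      simp only [no_cons]
      by_cases d1 : i % 2 = 1 ∧ (j - i) % 2 = 1 ∧ (2 * p - j) % 2 = 0
      · rw [if_pos (by omega), if_pos ⟨c, d1⟩, if_neg (by omega), if_neg (by omega), psi_odd _ d1.1, psi_odd _ d1.2.1]
        simp only [hP]; ring
      by_cases d2 : i % 2 = 1 ∧ (j - i) % 2 = 0 ∧ (2 * p - j) % 2 = 1
      · rw [if_pos (by omega), if_neg (by omega), if_pos ⟨c, d2⟩, if_neg (by omega), psi_odd _ d2.1,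
          Multiset.cons_swap, psi_odd _ d2.2.2]
        simp only [hP]; ring
      by_cases d3 : i % 2 = 0 ∧ (j - i) % 2 = 1 ∧ (2 * p - j) % 2 = 1
      · rw [if_pos (by omega), if_neg (by omega), if_neg (by omega), if_pos ⟨c, d3⟩, 
          Multiset.cons_swap, psi_odd _ d3.2.1, Multiset.cons_swap, psi_odd _ d3.2.2]
        simp only [hP]; ring
      rw [if_neg (by omega), if_neg (by tauto), if_neg (by tauto), if_neg (by tauto)]; simp
    · rw [if_neg c, if_neg (by tauto), if_neg (by tauto), if_neg (by tauto)]; simp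
  set h : ℕ → ℕ → ℕ → ℚ := fun a b c => om (2 * a + 1) * om (2 * b + 1) * (if c = 0 then 0 else P (2 * c)) with hh
  set T := ∑ i ∈ Finset.HasAntidiagonal.antidiagonal (p - 1), abelA 2 2 i.1 * (if i.2 = 0 then 0 else P (2 * i.2)) with hT
  have k1 : ∑ x ∈ Finset.HasAntidiagonal.antidiagonal (p - 1), ∑ y ∈ Finset.HasAntidiagonal.antidiagonal x.2, h x.1 y.1 y.2 = T := by
    rw [tri_assoc, hT]
    refine Finset.sum_congr rfl fun x _ => ?_
    simp only [hh]
    rw [← Finset.sum_mul, om2]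
  have q1 : ∀ a b c : ℕ, (if 0 < 2 * a + 1 ∧ 0 < 2 * b + 1 ∧ 0 < 2 * c + 0 then
     om (2 * a + 1) * om (2 * b + 1) * P (2 * c + 0) else 0) = h a b c := by
    intro a b c
    simp only [hh]
    by_cases hc : c = 0
    · rw [if_pos hc, if_neg (by omega)]; simp
    · rw [if_neg hc, if_pos (by omega)]; simp
  have q2 : ∀ a b c : ℕ, (if 0 < 2 * a + 1 ∧ 0 < 2 * b + 0 ∧ 0 < 2 * c + 1 then
     om (2 * a + 1) * om (2 * c + 1) * P (2 * b + 0) else 0) = h a c b := by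
    intro a b c
    rw [← q1 a c b]; congr 1; simp only [eq_iff_iff]; omega
  have q3 : ∀ a b c : ℕ, (if 0 < 2 * a + 0 ∧ 0 < 2 * b + 1 ∧ 0 < 2 * c + 1 then
     om (2 * b + 1) * om (2 * c + 1) * P (2 * a + 0) else 0) = h b c a := by
    intro a b c
    rw [← q1 b c a]; congr 1; simp only [eq_iff_iff]; omega
  simp only [q1, q2, q3]
  rw [k1]
  have k2 : ∑ x ∈ Finset.HasAntidiagonal.antidiagonal (p - 1), ∑ y ∈ Finset.HasAntidiagonal.antidiagonal x.2, h x.1 y.2 y.1 = T := by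
    rw [← k1]
    refine Finset.sum_congr rfl fun x _ => ?_
    rw [← Finset.Nat.sum_antidiagonal_swap]; rfl
  have k3 : ∑ x ∈ Finset.HasAntidiagonal.antidiagonal (p - 1), ∑ y ∈ Finset.HasAntidiagonal.antidiagonal x.2, h y.1 y.2 x.1 = T := by
    rw [hT, ← Finset.Nat.sum_antidiagonal_swap]
    refine Finset.sum_congr rfl fun x _ => ?_
    simp only [hh, Prod.fst_swap, Prod.snd_swap]
    rw [← Finset.sum_mul, om2]
  rw [k2, k3]
  ring

theorem sum_odd_range (p : ℕ) (G : ℕ → ℚ) :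
    ∑ i ∈ Finset.range (2 * p), (if i % 2 = 1 then G i else 0) = ∑ a ∈ Finset.range p, G (2 * a + 1) := by
  induction p with
  | zero => simp
  | succ p ih =>
    rw [show 2 * (p + 1) = 2 * p + 1 + 1 by ring, Finset.sum_range_succ, Finset.sum_range_succ, ih, Finset.sum_range_succ,
      if_neg (by omega), if_pos (by omega), add_zero]

theorem psi_all_odd (M : Multiset ℕ) (h : ne M = 0) : psi M = (M.map om).prod := by
  rw [psi, if_pos h, mul_one]

theorem BB_even (p q : ℕ) (M O : Multiset ℕ) (hM : M = (2 * p) ::ₘ (2 * q) ::ₘ O) :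
    BB (ff (no M + 2)) M (2 * p) (2 * q) = psi O * ∑ a ∈ Finset.range p, om (2 * a + 1) * om (2 * (p + q) - 1 - 2 * a) := by
  rw [Finset.mul_sum, ← Finset.sum_congr rfl (fun a ha => ?_), ← sum_odd_range p (fun i => psi O * (om i * om (2 * (p + q) - i))), BB]
  · refine Finset.sum_congr rfl fun i hi => ?_
    rw [Finset.mem_range] at hi
    rw [hM, Multiset.erase_cons_head, Multiset.erase_cons_head, ff]
    simp only [no_cons]
    by_cases c : i % 2 = 1
    · rw [if_pos (by omega), if_pos (by omega), if_pos c, psi_odd _ c, psi_odd _ (by omega),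
        show 2 * p - i + 2 * q = 2 * (p + q) - i by omega]
      ring
    · rw [if_neg c]
      split_ifs
      · omega
      · rfl
      · rfl
  · rw [show 2 * (p + q) - (2 * a + 1) = 2 * (p + q) - 1 - 2 * a by omega]

theorem BB_sum (p q : ℕ) (hp : 1 ≤ p) : ∑ a ∈ Finset.range p, om (2 * a + 1) * om (2 * (p + q) - 1 - 2 * a)
    + ∑ a ∈ Finset.range q, om (2 * a + 1) * om (2 * (q + p) - 1 - 2 * a) = abelA 2 2 (p + q - 1) := by
  rw [← om2, Finset.Nat.sum_antidiagonal_eq_sum_range_succ (f := fun a b => om (2 * a + 1) * om (2 * b + 1)),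
    show (p + q - 1).succ = p + q by omega, Finset.sum_range_add]
  congr 1
  · refine Finset.sum_congr rfl fun a ha => ?_
    rw [Finset.mem_range] at ha
    congr 2; omega
  · rw [← Finset.sum_range_reflect]
    refine Finset.sum_congr rfl fun a ha => ?_
    rw [Finset.mem_range] at ha
    rw [mul_comm]
    congr 2 <;> omega

theorem no_erase (a : ℕ) (M : Multiset ℕ) (h : a ∈ M) : no (M.erase a) + a % 2 = no M := by
  rw [← no_cons, Multiset.cons_erase h]

theorem no_erase_le (a : ℕ) (M : Multiset ℕ) : no (M.erase a) ≤ no M :=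
  Multiset.countP_le_of_le _ (Multiset.erase_le a M)

theorem BB_zero (l l' : ℕ) (M : Multiset ℕ) (hl : l ∈ M) (hl' : l' ∈ M) (h : l % 2 = 1 ∨ l' % 2 = 1) :
    BB (ff (no M + 2)) M l l' = 0 := by
  rw [BB]
  refine Finset.sum_eq_zero fun i _ => ?_
  split_ifs
  · rw [ff, if_neg]
    simp only [no_cons]
    have h1 := no_erase l M hl
    have h2 := no_erase_le l' (M.erase l)
    by_cases c : l % 2 = 1
    · omega
    · have h3 := no_erase l' (M.erase l) ((Multiset.mem_erase_of_ne (by rintro rfl; omega)).2 hl')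
      omega
  · rfl

noncomputable def term (M : Multiset ℕ) (l : ℕ) : ℚ := (l : ℚ) * (AA (ff (no M + 2)) M l +
         3 * ((M.map (fun l' : ℕ => (l' : ℚ) * BB (ff (no M + 2)) M l l')).sum - l * BB (ff (no M + 2)) M l l))

theorem term_odd (M : Multiset ℕ) (l : ℕ) (hl : l ∈ M) (ho : l % 2 = 1) :
    term M l = 3 * (((l : ℚ) - 1) / 2) * psi M := by
  have h1 : (M.map (fun l' : ℕ => (l' : ℚ) * BB (ff (no M + 2)) M l l')).sum = 0 := by
    rw [Multiset.map_congr rfl (g := fun _ => (0 : ℚ))]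
    · simp
    · intro l' hl'
      rw [BB_zero l l' M hl hl' (Or.inl ho), mul_zero]
  rw [term, h1, BB_zero l l M hl hl (Or.inl ho), mul_zero, sub_zero, mul_zero, add_zero,
    AA_odd l (l / 2) (by omega) M (M.erase l) (Multiset.cons_erase hl).symm]
  have : (l : ℚ) = 2 * (l / 2 : ℕ) + 1 := by
    have : l = 2 * (l / 2) + 1 := by omega
    exact_mod_cast this
  rw [this]
  ring

theorem odd_part (O : Multiset ℕ) (c : ℚ) (h : ne O = 0) (g : ℕ → ℚ)
    (hg : ∀ l ∈ O, l % 2 = 1 → g l = 3 * (((l : ℚ) - 1) / 2) * c) :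
    (O.map g).sum = 3 * (((O.sum : ℕ) - (no O : ℕ)) / 2) * c := by
  induction O using Multiset.induction_on with
  | empty => simp [no]
  | cons a O ih =>
    rw [ne_cons] at h
    rw [Multiset.map_cons, Multiset.sum_cons, ih (by omega) (fun l hl => hg l (Multiset.mem_cons_of_mem hl)),
      hg a (Multiset.mem_cons_self _ _) (by omega), Multiset.sum_cons, no_cons, show a % 2 = 1 by omega]
    push_cast
    ring

theorem term_even (p q : ℕ) (hp : 1 ≤ p) (M O : Multiset ℕ) (hO : ne O = 0) (hM : M = (2 * p) ::ₘ (2 * q) ::ₘ O) :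
    term M (2 * p) = 3 * psi O * ((2 * p) * om (2 * q) * ∑ i ∈ Finset.HasAntidiagonal.antidiagonal (p - 1),
      abelA 2 2 i.1 * (if i.2 = 0 then 0 else om (2 * i.2) * (4 / (2 * i.2 + 2 * q)))
      + 4 * p * q * ∑ a ∈ Finset.range p, om (2 * a + 1) * om (2 * (p + q) - 1 - 2 * a)) := by
  have h1 : (O.map (fun l' : ℕ => (l' : ℚ) * BB (ff (no M + 2)) M (2 * p) l')).sum = 0 := by
    rw [Multiset.map_congr rfl (g := fun _ => (0 : ℚ))]
    · simp
    · intro l' hl'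
      rw [BB_zero (2 * p) l' M (by simp [hM]) (by simp [hM, hl']) (Or.inr ?_), mul_zero]
      have := Multiset.countP_eq_zero.1 hO l' hl'
      rw [Nat.even_iff] at this
      omega
  have h2 : (M.map (fun l' : ℕ => (l' : ℚ) * BB (ff (no M + 2)) M (2 * p) l')).sum
      = (2 * p : ℕ) * BB (ff (no M + 2)) M (2 * p) (2 * p) + (2 * q : ℕ) * BB (ff (no M + 2)) M (2 * p) (2 * q) := by
    have : ∀ F : ℕ → ℚ, (O.map F).sum = 0 → (M.map F).sum = F (2 * p) + F (2 * q) := by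
      intro F hF
      rw [hM, Multiset.map_cons, Multiset.sum_cons, Multiset.map_cons, Multiset.sum_cons, hF, add_zero]
    rw [this _ h1]
  rw [term, h2, BB_even p q M O hM, AA_even p hp M _ hM]
  have h3 : ∑ i ∈ Finset.HasAntidiagonal.antidiagonal (p - 1), abelA 2 2 i.1 * (if i.2 = 0 then 0 else psi ((2 * i.2) ::ₘ (2 * q) ::ₘ O))
     = psi O * (om (2 * q) * ∑ i ∈ Finset.HasAntidiagonal.antidiagonal (p - 1),
      abelA 2 2 i.1 * (if i.2 = 0 then 0 else om (2 * i.2) * (4 / (2 * i.2 + 2 * q)))) := by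
    rw [Finset.mul_sum, Finset.mul_sum]
    refine Finset.sum_congr rfl fun i _ => ?_
    split_ifs
    · simp
    · have hE : O.filter Even = 0 := Multiset.filter_eq_nil.2 (Multiset.countP_eq_zero.1 hO)
      rw [psi_all_odd O hO, psi, if_neg (by simp only [ne_cons]; omega), ES, Multiset.filter_cons_of_pos _ (by simp),
        Multiset.filter_cons_of_pos _ (by simp), hE]
      simp
      ring
  rw [h3]
  push_cast
  ring

theorem tot0 (M : Multiset ℕ) (h : ne M = 0) :
    (M.map (term M)).sum = 3 * (((M.sum : ℕ) - (no M : ℕ)) / 2) * psi M :=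
  odd_part M _ h _ (fun l hl ho => term_odd M l hl ho)

theorem tot2 (p q : ℕ) (hp : 1 ≤ p) (hq : 1 ≤ q) (M O : Multiset ℕ) (hO : ne O = 0) (hM : M = (2 * p) ::ₘ (2 * q) ::ₘ O) :
    (M.map (term M)).sum = 3 * (((M.sum : ℕ) - (no M : ℕ)) / 2) * psi M := by
  have h1 := odd_part O (psi M) hO (term M) (fun l hl ho => term_odd M l (by simp [hM, hl]) ho)
  have h2 : ∀ F : ℕ → ℚ, (M.map F).sum = F (2 * p) + F (2 * q) + (O.map F).sum := by
    intro F
    rw [hM, Multiset.map_cons, Multiset.sum_cons, Multiset.map_cons, Multiset.sum_cons, add_assoc]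
  have hM' : M = (2 * q) ::ₘ (2 * p) ::ₘ O := by rw [hM, Multiset.cons_swap]
  rw [h2, h1, term_even p q hp M O hO hM, term_even q p hq M O hO hM']
  have hpsi : psi M = psi O * (om (2 * p) * om (2 * q)) * (4 / (2 * p + 2 * q)) := by
    have hE : O.filter Even = 0 := Multiset.filter_eq_nil.2 (Multiset.countP_eq_zero.1 hO)
    rw [psi_all_odd O hO, hM, psi, if_neg (by simp only [ne_cons]; omega), ES, Multiset.filter_cons_of_pos _ (by simp),
        Multiset.filter_cons_of_pos _ (by simp), hE]
    simp only [Multiset.map_cons, Multiset.prod_cons, Multiset.sum_cons, Multiset.sum_zero, add_zero]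
    push_cast
    ring
  have e1 := EI p q hp hq
  rw [← BB_sum p q hp] at e1
  have hs : ((M.sum : ℕ) : ℚ) = 2 * p + 2 * q + (O.sum : ℕ) := by
    rw [hM, Multiset.sum_cons, Multiset.sum_cons]; push_cast; ring
  have hn : no M = no O := by
    rw [hM, no_cons, no_cons]; omega
  rw [hs, hn, hpsi]
  have hpp : (1 : ℚ) ≤ p := by exact_mod_cast hp
  have hne : (2 * p + 2 * q : ℚ) ≠ 0 := by positivity
  have e2 : (2 * p + 2 * q : ℚ) * (4 / (2 * p + 2 * q)) = 4 := by field_simp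
  linear_combination 3 * psi O * e1 - 3 / 2 * psi O * (om (2 * p) * om (2 * q)) * e2

theorem tot (M : Multiset ℕ) (hpos : 0 ∉ M) (h : ne M = 0 ∨ ne M = 2) :
    (M.map (term M)).sum = 3 * (((M.sum : ℕ) - (no M : ℕ)) / 2) * psi M := by
  rcases h with h | h
  · exact tot0 M h
  · have pick : ∀ (M : Multiset ℕ) (n : ℕ), ne M = n + 1 → 0 ∉ M → ∃ p O, 1 ≤ p ∧ M = (2 * p) ::ₘ O ∧ ne O = n ∧ 0 ∉ O := by
      intro M n hn h0
      have : 0 < M.countP Even := by change 0 < ne M; omega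
      obtain ⟨a, ha, he⟩ := Multiset.countP_pos.1 this
      obtain ⟨O, rfl⟩ := Multiset.exists_cons_of_mem ha
      rw [ne_cons] at hn
      rw [Nat.even_iff] at he
      have ha0 : a ≠ 0 := by rintro rfl; exact h0 ha
      refine ⟨a / 2, O, by omega, ?_, by omega, fun h => h0 (Multiset.mem_cons_of_mem h)⟩
      rw [show 2 * (a / 2) = a by omega]
    obtain ⟨p, R, hp, hM, hR, hR0⟩ := pick M 1 h hpos
    obtain ⟨q, O, hq, hRO, hO, _⟩ := pick R 0 hR hR0
    exact tot2 p q hp hq M O hO (by rw [hM, hRO])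

section cnt
variable {α : Type*} [Fintype α] [DecidableEq α]

theorem TT_three (u v w : α) (h1 : u ≠ v) (h2 : v ≠ w) (h3 : u ≠ w) : (TT u v w).IsThreeCycle := by
  rw [TT, swap_comm u v]
  exact isThreeCycle_swap_mul_swap_same h2 h1.symm h3.symm

theorem TT_rep (t : Perm α) (ht : t.IsThreeCycle) (u : α) (hu : t u ≠ u) :
    u ≠ t⁻¹ u ∧ t⁻¹ u ≠ t u ∧ u ≠ t u ∧ TT u (t⁻¹ u) (t u) = t := by
  have h3 : t ^ 3 = 1 := by rw [← ht.orderOf]; exact pow_orderOf_eq_one t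
  have h3' : ∀ z, t (t (t z)) = z := by
    intro z
    have := congrArg (fun s : Perm α => s z) h3
    simpa [pow_succ] using this
  have hinv : t⁻¹ u = t (t u) := by rw [Perm.inv_eq_iff_eq, h3']
  rw [hinv]
  have n1 : u ≠ t (t u) := by
    intro h; have := h3' u; rw [← h] at this; exact hu this
  have n2 : t (t u) ≠ t u := fun h => hu (t.injective h)
  refine ⟨n1, n2, hu.symm, ?_⟩
  have hs : t.support = {u, t u, t (t u)} := by
    symm
    apply Finset.eq_of_subset_of_card_le
    · intro z hz
      simp only [Finset.mem_insert, Finset.mem_singleton] at hz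
      rw [mem_support]
      rcases hz with rfl | rfl | rfl
      · exact hu
      · exact n2
      · rw [h3']; exact n1
    · rw [ht.card_support, Finset.card_eq_three.2 ⟨u, t u, t (t u), hu.symm, n1, n2.symm, rfl⟩]
  ext z
  by_cases hz : z ∈ t.support
  · rw [hs] at hz
    simp only [Finset.mem_insert, Finset.mem_singleton] at hz
    have := h3' u
    simp only [TT, Perm.mul_apply, swap_apply_def]
    rcases hz with rfl | rfl | rfl <;> grind
  · have hz' := notMem_support.1 hz
    rw [hs] at hz
    simp only [Finset.mem_insert, Finset.mem_singleton] at hz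
    rw [hz']
    simp only [TT, Perm.mul_apply, swap_apply_def]
    grind

theorem TT_app (u v w : α) (h1 : u ≠ v) (_h2 : v ≠ w) (h3 : u ≠ w) : TT u v w u = w ∧ TT u v w v = u := by
  simp only [TT, Perm.mul_apply, swap_apply_def]
  grind

theorem sum_three (F : Perm α → ℚ) :
    ∑ u, ∑ v, ∑ w, (if u ≠ v ∧ v ≠ w ∧ u ≠ w then F (TT u v w) else 0)
      = 3 * ∑ t ∈ Finset.univ.filter (fun t : Perm α => t.cycleType = {3}), F t := by
  have e : ∑ u, ∑ v, ∑ w, (if u ≠ v ∧ v ≠ w ∧ u ≠ w then F (TT u v w) else 0)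
    = ∑ s : α × α × α, (if s.1 ≠ s.2.1 ∧ s.2.1 ≠ s.2.2 ∧ s.1 ≠ s.2.2 then F (TT s.1 s.2.1 s.2.2) else 0) := by
    simp only [Fintype.sum_prod_type]
  rw [e, ← Finset.sum_filter, ← Finset.sum_fiberwise_of_maps_to
    (t := Finset.univ.filter (fun t : Perm α => t.cycleType = {3})) (g := fun s => TT s.1 s.2.1 s.2.2), Finset.mul_sum]
  · refine Finset.sum_congr rfl fun t ht => ?_
    have ht : t.IsThreeCycle := (Finset.mem_filter.1 ht).2
    rw [Finset.sum_congr rfl (g := fun _ => F t), Finset.sum_const]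
    · suffices h : (Finset.filter (fun s : α × α × α => TT s.1 s.2.1 s.2.2 = t)
        (Finset.univ.filter (fun s : α × α × α => s.1 ≠ s.2.1 ∧ s.2.1 ≠ s.2.2 ∧ s.1 ≠ s.2.2))).card = 3 by
        rw [h]; simp
      rw [← ht.card_support]
      symm
      refine Finset.card_bij (fun u _ => (u, t⁻¹ u, t u)) ?_ ?_ ?_
      · intro u hu
        obtain ⟨a, b, c, d⟩ := TT_rep t ht u (mem_support.1 hu)
        rw [Finset.mem_filter, Finset.mem_filter]
        exact ⟨⟨Finset.mem_univ _, a, b, c⟩, d⟩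
      · intro u _ v _ h
        exact (Prod.mk.inj h).1
      · rintro ⟨u, v, w⟩ h
        rw [Finset.mem_filter, Finset.mem_filter] at h
        obtain ⟨⟨_, a, b, c⟩, d⟩ := h
        simp only at a b c d
        obtain ⟨f, g⟩ := TT_app u v w a b c
        rw [d] at f g
        refine ⟨u, ?_, ?_⟩
        · rw [mem_support, f]; exact c.symm
        · rw [f, show t⁻¹ u = v by rw [Perm.inv_eq_iff_eq, g]]
    · intro s hs
      rw [(Finset.mem_filter.1 hs).2]
  · rintro ⟨u, v, w⟩ h
    rw [Finset.mem_filter] at h ⊢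
    exact ⟨Finset.mem_univ _, TT_three u v w h.2.1 h.2.2.1 h.2.2.2⟩

noncomputable def cnt : ℕ → Perm α → ℚ
  | 0, x => if x = 1 then 1 else 0
  | m + 1, x => ∑ t ∈ Finset.univ.filter (fun t : Perm α => t.cycleType = {3}), cnt m (t * x)

theorem cnt_card (m : ℕ) (x : Perm α) :
    ((Nat.card {w : Fin m → Perm α // (∀ i, (w i).IsThreeCycle) ∧ (List.ofFn w).prod = x} : ℕ) : ℚ) = cnt m x := by
  have key : ∀ (m : ℕ) (x : Perm α),
    ∑ w : Fin m → Perm α, (if (∀ i, (w i).cycleType = {3}) ∧ (List.ofFn w).prod = x then (1 : ℚ) else 0) = cnt m x := by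
    intro m
    induction m with
    | zero => intro x; simp [cnt, eq_comm]
    | succ m ih =>
      intro x
      rw [cnt, ← (Fin.consEquiv (fun _ : Fin (m + 1) => Perm α)).sum_comp, Fintype.sum_prod_type, Finset.sum_filter,
        ← _root_.Equiv.sum_comp (Equiv.inv (Perm α))]
      refine Finset.sum_congr rfl fun t _ => ?_
      simp only [Equiv.inv_apply]
      split_ifs with ht
      · rw [← ih]
        refine Finset.sum_congr rfl fun w _ => ?_
        have : ((∀ i, ((Fin.consEquiv (fun _ : Fin (m + 1) => Perm α)) (t⁻¹, w) i).cycleType = {3}) ∧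
          (List.ofFn ((Fin.consEquiv (fun _ : Fin (m + 1) => Perm α)) (t⁻¹, w))).prod = x) ↔
          ((∀ i, (w i).cycleType = {3}) ∧ (List.ofFn w).prod = t * x) := by
          rw [Fin.forall_fin_succ, List.ofFn_succ, List.prod_cons]
          simp only [Fin.consEquiv_apply, Fin.cons_zero, Fin.cons_succ, cycleType_inv, ht, true_and]
          rw [inv_mul_eq_iff_eq_mul]
        simp only [this]
      · refine Finset.sum_eq_zero fun w _ => ?_
        rw [if_neg]
        rintro ⟨h, _⟩
        have := h 0
        simp [Fin.consEquiv] at this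
        exact ht this
  rw [← key, Finset.sum_boole]
  congr 1
  apply Nat.subtype_card
  intro w
  rw [Finset.mem_filter]
  exact ⟨fun h => h.2, fun h => ⟨Finset.mem_univ _, h⟩⟩

theorem three_cnt (m : ℕ) (x : Perm α) :
    3 * cnt (m + 1) x = ∑ u, ∑ v, ∑ w, (if u ≠ v ∧ v ≠ w ∧ u ≠ w then cnt m (TT u v w * x) else 0) := by
  rw [sum_three (fun t => cnt m (t * x)), cnt]

theorem pts_one : pts (1 : Perm α) = Multiset.replicate (Fintype.card α) 1 := by
  rw [pts, parts_partition]; simp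

theorem no_one : no (pts (1 : Perm α)) = Fintype.card α := by
  rw [pts_one, no, Multiset.countP_eq_card_filter, Multiset.filter_eq_self.2, Multiset.card_replicate]
  intro a ha
  rw [Multiset.eq_of_mem_replicate ha]; exact odd_one

theorem eq_one_of_no (x : Perm α) (h : no (pts x) = Fintype.card α) : x = 1 := by
  have h1 : no (pts x) ≤ (pts x).card := Multiset.countP_le_card _ _
  have h0 : x.support.card ≤ Fintype.card α := Finset.card_le_univ _
  rw [h, pts, parts_partition, Multiset.card_add, Multiset.card_replicate] at h1
  have h2 := Multiset.card_nsmul_le_sum (s := x.cycleType) (a := 2) (fun a ha => two_le_of_mem_cycleType ha)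
  rw [sum_cycleType, smul_eq_mul] at h2
  rw [← card_cycleType_eq_zero]
  omega

theorem cnt_low (m : ℕ) : ∀ x : Perm α, no (pts x) + 2 * m < Fintype.card α → cnt m x = 0 := by
  induction m with
  | zero =>
    intro x hx
    rw [cnt, if_neg]
    rintro rfl
    rw [no_one] at hx; omega
  | succ m ih =>
    intro x hx
    have : 3 * cnt (m + 1) x = 0 := by
      rw [three_cnt]
      refine Finset.sum_eq_zero fun u _ => Finset.sum_eq_zero fun v _ => Finset.sum_eq_zero fun w _ => ?_
      split_ifs with h
      · apply ih
        have := (move_no x u v w h.1 h.2.1 h.2.2).1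
        omega
      · rfl
    linarith

theorem cnt_main (m : ℕ) : ∀ x : Perm α, no (pts x) + 2 * m = Fintype.card α → (ne (pts x) = 0 ∨ ne (pts x) = 2) →
    cnt m x = m.factorial * psi (pts x) := by
  induction m with
  | zero =>
    intro x hx _
    have := eq_one_of_no x hx
    subst this
    rw [cnt, if_pos rfl, psi_all_odd, pts_one]
    · have : om 1 = 1 := by simp [om]
      simp [this]
    · rw [pts_one, ne, Multiset.countP_eq_zero]
      intro a ha
      rw [Multiset.eq_of_mem_replicate ha]; simp
  | succ m ih =>
    intro x hx hne
    have h1 : 3 * cnt (m + 1) x = m.factorial * ∑ u, ∑ v, ∑ w,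
        (if u ≠ v ∧ v ≠ w ∧ u ≠ w then ff (no (pts x) + 2) (pts (TT u v w * x)) else 0) := by
      rw [three_cnt]
      simp only [Finset.mul_sum]
      refine Finset.sum_congr rfl fun u _ => Finset.sum_congr rfl fun v _ => Finset.sum_congr rfl fun w _ => ?_
      split_ifs with h
      · obtain ⟨a, b⟩ := move_no x u v w h.1 h.2.1 h.2.2
        rw [ff]
        split_ifs with c
        · rw [ih _ (by omega) (by have := b c; omega)]
        · rw [mul_zero]; exact cnt_low m _ (by omega)
      · simp
    rw [triple_sum' x] at h1
    · have h2 := tot (pts x) (fun h => absurd (x.partition.parts_pos h) (lt_irrefl _)) hne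
      have h1 := h1.trans (congrArg ((m.factorial : ℚ) * ·) h2)
      beta_reduce at h1
      rw [pts_sum] at h1
      rw [Nat.factorial_succ]
      have h3 : ((no (pts x) : ℕ) : ℚ) + 2 * (m + 1) = (Fintype.card α : ℕ) := by exact_mod_cast hx
      rw [← h3] at h1
      push_cast
      linear_combination h1 / 3
    · rw [ff, if_neg (by omega)]
    · intro a b c Q h
      rw [ff, if_neg]
      rw [h]; simp only [no_cons]; omega

end cnt

theorem final (p q : ℕ) (hp : 1 ≤ p) (hq : 1 ≤ q) (a b : Perm (Fin (2 * (p + q))))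
    (ha : a.IsCycle) (hb : b.IsCycle)
    (hacard : a.support.card = 2 * p) (hbcard : b.support.card = 2 * q)
    (hdisj : a.Disjoint b) :
    Nat.card {w : Fin (p + q) → Perm (Fin (2 * (p + q))) //
        (∀ i, (w i).IsThreeCycle) ∧ (List.ofFn w).prod = a * b}
      * ((p - 1).factorial * (q - 1).factorial)
      = 2 * (p + q - 1).factorial * (2 * p) ^ p * (2 * q) ^ q := by
  have hpts : pts (a * b) = (2 * p) ::ₘ (2 * q) ::ₘ 0 := by
    rw [pts, parts_partition, hdisj.cycleType_mul, ha.cycleType, hb.cycleType, hdisj.card_support_mul, hacard, hbcard,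
      Fintype.card_fin, show 2 * (p + q) - (2 * p + 2 * q) = 0 by omega]
    simp
  have hno : no (pts (a * b)) = 0 := by
    rw [hpts]; simp only [no_cons]; simp [no]
  have hne : ne (pts (a * b)) = 2 := by
    rw [hpts]; simp only [ne_cons]; simp [ne]
  have h1 := cnt_card (p + q) (a * b)
  rw [cnt_main (p + q) (a * b) (by rw [hno, Fintype.card_fin]; omega) (Or.inr hne), psi, if_neg (by omega), hpts, ES,
    Multiset.filter_cons_of_pos _ (by simp), Multiset.filter_cons_of_pos _ (by simp)] at h1
  simp only [Multiset.map_cons, Multiset.prod_cons, Multiset.sum_cons, Multiset.sum_zero, add_zero, Multiset.map_zero,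
    Multiset.prod_zero, mul_one, Multiset.filter_zero] at h1
  have o1 : ∀ k, om (2 * k) = (2 * k) ^ k / (k - 1).factorial := by
    intro k
    rw [om, if_pos (by simp), show 2 * k / 2 = k by omega]; push_cast; rfl
  rw [o1, o1] at h1
  have h2 : ((p + q).factorial : ℚ) = (p + q) * (p + q - 1).factorial := by
    rw [← Nat.mul_factorial_pred (by omega : p + q ≠ 0)]; push_cast; ring
  rw [h2] at h1
  have f1 : ((p - 1).factorial : ℚ) ≠ 0 := by positivity
  have f2 : ((q - 1).factorial : ℚ) ≠ 0 := by positivity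
  have hpp : (1 : ℚ) ≤ p := by exact_mod_cast hp
  have f3 : (p + q : ℚ) ≠ 0 := by positivity
  have f4 : (2 * p + 2 * q : ℚ) ≠ 0 := by positivity
  have : ((Nat.card {w : Fin (p + q) → Perm (Fin (2 * (p + q))) //
        (∀ i, (w i).IsThreeCycle) ∧ (List.ofFn w).prod = a * b} : ℕ) : ℚ)
      * ((p - 1).factorial * (q - 1).factorial)
      = 2 * (p + q - 1).factorial * (2 * p) ^ p * (2 * q) ^ q := by
    rw [h1]
    push_cast
    rw [show (2 * p + 2 * q : ℚ) = 2 * (p + q) by ring]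
    field_simp
    ring
  exact_mod_cast this

theorem stmt18 (p q : ℕ) (hq : 1 ≤ q) (hpq : q ≤ p)
    (a b : Perm (Fin (2*(p+q))))
    (ha : a.IsCycle) (hb : b.IsCycle)
    (hacard : a.support.card = 2*p) (hbcard : b.support.card = 2*q)
    (hdisj : a.Disjoint b) :
    Nat.card {w : Fin (p+q) → Perm (Fin (2*(p+q))) //
        (∀ i, (w i).IsThreeCycle) ∧ (List.ofFn w).prod = a * b}
      * ((p-1).factorial * (q-1).factorial)
      = 2 * (p+q-1).factorial * (2*p)^p * (2*q)^q := by 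
  exact final p q (le_trans hq hpq) hq a b ha hb hacard hbcard hdisj
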